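/- For all complex numbers z and s with Re(z) > 1 and Re(s) > 1, one has the identity ∑_{ρ} m(ρ) · (z-ρ)^{-s} = z^{-s} + (z-1)^{-s} − ∑_{n=0}^∞ (z+2n)^{-s} − (1/Γ(s)) ∑_{m=1}^∞ ∑_{p prime} (log p) · p^{-mz} · (m·log p)^{s-1}, where the left-hand sum runs over the non-trivial zeros ρ of the Riemann zeta function (i.e. the zeros with 0 < Re(ρ) < 1), m(ρ) denotes the order of vanishing of ζ at ρ, all series converge absolutely, and all complex powers w^{-s}, w^{s-1} are taken with the principal branch. -/

import Mathlib

/-!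
The proof obtains the formula at `s = 2` from the Hadamard-type theory of the entire function
`xi z = z (z - 1) π^{-z/2} Γ(z/2) ζ(z)`, and then deforms `2` into `s`.

The function `xi` has order at most one (`xi_growth`): its Mellin representation by a theta kernel
bounds it by a Gamma function in `Re z ≥ 1/2`, and the functional equation gives the other
half-plane. Its zeros are the non-trivial zeros of `ζ`, with the same multiplicities
(`xi_eq_zero_iff`, `order_xi_eq`). Dividing zeros out and applying the maximum principle bounds the
number of zeros in a disc (`sum_order_le`), so `∑ m(ρ) |z - ρ|^{-σ}` converges for every `σ > 1`.
The zero-free quotient left over on a disc of radius `R` has second logarithmic derivative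
`O(R^{-1/2})` by the Borel–Carathéodory theorem (`norm_deriv_logDeriv_le`), so
minus the second logarithmic derivative of `xi` equals `∑ m(ρ) (z - ρ)⁻²`
(`hasSum_inv_sub_sq`). Computing the left-hand side from the
definition of `xi`, with the trigamma series (`hasSum_trigamma`) and the Dirichlet series of
the second logarithmic derivative of `ζ`, gives the formula at `s = 2` (`deriv_logDeriv_xi`).

For real `σ` in `(1, 2)`, that identity at `z + x` is multiplied by `x^(1-σ)` and integrated over
`x > 0`. Since `∫ x^(1-σ) (w + x)⁻² dx = Γ(2-σ) Γ(σ) w^{-σ}` (`integral_kernel`) and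
`∫ x^(1-σ) n^{-x} dx = Γ(2-σ) (log n)^(σ-2)` (`integral_prime_kernel`), division by
`Γ(2-σ) Γ(σ)` yields the formula at `s = σ` (`formula_of_lt_two`). Both sides are holomorphic in
`Re s > 1`, so the identity theorem extends it to all such `s` (`formula_vonMangoldt`). The sum
over `n` against `Λ(n)` is then reindexed by primes and exponents (`hasSum_primes_iff`).
-/

open Complex Filter Topology

/-- The order of vanishing of `f` at `ρ`: the least `n` such that the `n`-th iterated
derivative of `f` does not vanish at `ρ` (for `f` analytic at `ρ`, this is the usual
multiplicity of the zero `ρ`). -/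
noncomputable def vanishingOrder (f : ℂ → ℂ) (ρ : ℂ) : ℕ :=
  sInf {n : ℕ | iteratedDeriv n f ρ ≠ 0}

/-- The non-trivial zeros of the Riemann zeta function. -/
def NontrivialZeros : Type :=
  {ρ : ℂ // riemannZeta ρ = 0 ∧ 0 < ρ.re ∧ ρ.re < 1}

/-! ### Zero-free functions and division by zeros -/

/-- A zero-free function exceeding its central value by a factor of at most `e^M` on a disc of
radius `R` has second logarithmic derivative `O(M / R²)` near the centre: Borel–Carathéodory bounds
a branch of its logarithm, and Cauchy's estimate the second derivative of that branch. -/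
lemma norm_deriv_logDeriv_le {g : ℂ → ℂ} {c : ℂ} {R M : ℝ} (hR : 0 < R) (hM : 0 < M)
    (hg : DifferentiableOn ℂ g (Metric.ball c R)) (hg0 : ∀ w ∈ Metric.ball c R, g w ≠ 0)
    (hb : ∀ w ∈ Metric.ball c R, ‖g w‖ ≤ Real.exp M * ‖g c‖) {z : ℂ} (hz : ‖z - c‖ ≤ R / 4) :
    ‖deriv (logDeriv g) z‖ ≤ 64 * M / R ^ 2 := by
  have hopen : IsOpen (Metric.ball c R) := Metric.isOpen_ball
  have hld : DifferentiableOn ℂ (logDeriv g) (Metric.ball c R) :=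
    (hg.deriv hopen).div hg hg0
  obtain ⟨h, hc, hh⟩ := hld.isExactOn_ball.with_val_at c 0
  have hcm : c ∈ Metric.ball c R := Metric.mem_ball_self hR
  -- `g = g c * exp h` on the ball, because the quotient has derivative zero
  have hexp : ∀ w ∈ Metric.ball c R, g w = g c * exp (h w) := by
    intro w hw
    have key : g w * exp (-h w) = g c * exp (-h c) := by
      refine (convex_ball c R).is_const_of_fderivWithin_eq_zero (𝕜 := ℂ)
        (f := fun w => g w * exp (-h w)) ?_ ?_ hw hcm
      · exact hg.mul (DifferentiableOn.cexp
          (fun x hx => (hh x hx).differentiableAt.differentiableWithinAt.neg))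
      · intro x hx
        have h1 : HasDerivAt g (deriv g x) x := (hg.differentiableAt (hopen.mem_nhds hx)).hasDerivAt
        have h2 := h1.mul ((hh x hx).neg.cexp)
        have h3 : deriv g x * exp (-h x) + g x * (exp (-h x) * -(logDeriv g x)) = 0 := by
          have := hg0 x hx
          rw [logDeriv_apply]; field_simp; ring
        rw [fderivWithin_of_isOpen hopen hx]
        have h4 : HasDerivAt (fun w => g w * exp (-h w)) 0 x := by
          rw [← h3]; exact h2
        have := h4.hasFDerivAt.fderiv
        rw [this]; simp
    rw [hc] at key
    simp only [neg_zero, Complex.exp_zero, mul_one] at key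
    rw [← key, mul_assoc, ← Complex.exp_add]; simp
  have hgc : 0 < ‖g c‖ := norm_pos_iff.2 (hg0 c hcm)
  have hre : ∀ w ∈ Metric.ball c R, (h w).re ≤ M := by
    intro w hw
    have h1 := hb w hw
    rw [hexp w hw, norm_mul, Complex.norm_exp, mul_comm] at h1
    exact Real.exp_le_exp.1 (le_of_mul_le_mul_right h1 hgc)
  have hhd : DifferentiableOn ℂ h (Metric.ball c R) :=
    fun x hx => (hh x hx).differentiableAt.differentiableWithinAt
  have hbc : ∀ w, ‖w - c‖ ≤ R / 2 → ‖h w‖ ≤ 2 * M := by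
    intro w hw
    have h1 := Complex.borelCaratheodory_zero (f := fun u => h (u + c)) (R := R) (z := w - c) hM
      (hhd.comp (by fun_prop) (fun u hu => by simpa using hu))
      (fun u hu => hre _ (by simpa using hu)) hR (by simp; linarith) (by simpa using hc)
    simp only [sub_add_cancel] at h1
    refine h1.trans ?_
    rw [div_le_iff₀ (by linarith)]
    nlinarith
  have hzR : Metric.ball z (R / 4) ⊆ Metric.ball c R := by
    intro w hw
    simp only [Metric.mem_ball, dist_eq_norm] at hw ⊢
    have := norm_add_le (w - z) (z - c)
    simp only [sub_add_sub_cancel] at this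
    linarith
  have hzR' : Metric.closedBall z (R / 4) ⊆ Metric.ball c R := by
    intro w hw
    simp only [Metric.mem_closedBall, Metric.mem_ball, dist_eq_norm] at hw ⊢
    have := norm_add_le (w - z) (z - c)
    simp only [sub_add_sub_cancel] at this
    linarith
  have hcau := Complex.norm_iteratedDeriv_le_of_forall_mem_sphere_norm_le (c := z) (R := R / 4)
    (C := 2 * M) (f := h) 2 (by positivity) (hhd.diffContOnCl_ball hzR')
    (fun w hw => hbc w (by
      simp only [Metric.mem_sphere, dist_eq_norm] at hw
      have := norm_add_le (w - z) (z - c)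
      simp only [sub_add_sub_cancel] at this
      linarith))
  have heq : iteratedDeriv 2 h z = deriv (logDeriv g) z := by
    rw [iteratedDeriv_succ, iteratedDeriv_one]
    apply Filter.EventuallyEq.deriv_eq
    have hzm : z ∈ Metric.ball c R := hzR (Metric.mem_ball_self (by positivity))
    filter_upwards [hopen.mem_nhds hzm] with w hw
    exact (hh w hw).deriv
  rw [heq] at hcau
  refine hcau.trans (le_of_eq ?_)
  simp [Nat.factorial]; field_simp; ring

lemma exists_pow_mul_of_le_order (n : ℕ) : ∀ (g : ℂ → ℂ) (_ : Differentiable ℂ g) (ρ : ℂ)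
    (_ : (n : ℕ∞) ≤ analyticOrderAt g ρ),
    ∃ h : ℂ → ℂ, Differentiable ℂ h ∧ ∀ z, g z = (z - ρ) ^ n * h z := by
  induction n with
  | zero => exact fun g hg ρ _ => ⟨g, hg, by simp⟩
  | succ n ih =>
    intro g hg ρ hn
    have h0 : g ρ = 0 := by
      rw [← (hg.analyticAt ρ).analyticOrderAt_ne_zero]
      intro h
      rw [h] at hn
      simp at hn
    have hd : Differentiable ℂ (dslope g ρ) := by
      rw [← differentiableOn_univ] at hg ⊢
      exact (Complex.differentiableOn_dslope Filter.univ_mem).2 hg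
    have hfac : ∀ z, g z = (z - ρ) * dslope g ρ z := by
      intro z
      have := sub_smul_dslope g ρ z
      rw [h0, sub_zero, smul_eq_mul] at this
      exact this.symm
    have hord : analyticOrderAt g ρ = 1 + analyticOrderAt (dslope g ρ) ρ := by
      have h1 : g = (fun z => z - ρ) * dslope g ρ := by ext z; simpa using hfac z
      conv_lhs => rw [h1]
      rw [analyticOrderAt_mul (by fun_prop) (hd.analyticAt ρ)]
      congr 1
      simp
    have hn' : (n : ℕ∞) ≤ analyticOrderAt (dslope g ρ) ρ := by
      rw [hord] at hn
      push_cast at hn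
      rw [add_comm] at hn
      exact (ENat.add_le_add_iff_left (by simp)).1 hn
    obtain ⟨h, hh, hz⟩ := ih _ hd ρ hn'
    refine ⟨h, hh, fun z => ?_⟩
    rw [hfac z, hz z]; ring

lemma analyticOrderAt_ne_top_of_entire {f : ℂ → ℂ} (hf : Differentiable ℂ f) {a : ℂ}
    (ha : f a ≠ 0) (z : ℂ) : analyticOrderAt f z ≠ ⊤ := by
  have h1 : AnalyticOnNhd ℂ f Set.univ := fun x _ => hf.analyticAt x
  refine h1.analyticOrderAt_ne_top_of_isPreconnected isPreconnected_univ (x := a) trivial trivial ?_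
  have := (hf.analyticAt a).analyticOrderAt_eq_zero.2 ha
  rw [this]; simp

/-- The zeros at finitely many of the points `e i` can be divided out of an entire function with
their full multiplicity. -/
lemma exists_factor {ι : Type*} {f : ℂ → ℂ} (hf : Differentiable ℂ f) {a : ℂ}
    (ha : f a ≠ 0) {e : ι → ℂ} (he : Function.Injective e) (S : Finset ι) :
    ∃ g : ℂ → ℂ, Differentiable ℂ g ∧
      (∀ z, f z = (∏ i ∈ S, (z - e i) ^ (analyticOrderNatAt f (e i))) * g z) ∧
      ∀ i ∈ S, g (e i) ≠ 0 := by
  classical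
  induction S using Finset.induction_on with
  | empty => exact ⟨f, hf, by simp, by simp⟩
  | insert j S hj ih =>
    obtain ⟨g, hg, hfac, hne⟩ := ih
    set P : ℂ → ℂ := fun z => ∏ i ∈ S, (z - e i) ^ (analyticOrderNatAt f (e i)) with hP
    have hPd : Differentiable ℂ P := by rw [hP]; fun_prop
    have hPj : P (e j) ≠ 0 := by
      simp only [hP]
      refine Finset.prod_ne_zero_iff.2 fun i hi => pow_ne_zero _ ?_
      rw [sub_ne_zero]
      intro h
      exact hj (he h ▸ hi)
    have hfP : f = P * g := by ext z; exact hfac z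
    have hord : analyticOrderAt f (e j) = analyticOrderAt g (e j) := by
      conv_lhs => rw [hfP]
      rw [analyticOrderAt_mul (hPd.analyticAt _) (hg.analyticAt _),
        (hPd.analyticAt _).analyticOrderAt_eq_zero.2 hPj, zero_add]
    have htop := analyticOrderAt_ne_top_of_entire hf ha (e j)
    have hcast : ((analyticOrderNatAt f (e j) : ℕ) : ℕ∞) = analyticOrderAt g (e j) := by
      rw [Nat.cast_analyticOrderNatAt htop, hord]
    obtain ⟨h, hh, hgh⟩ := exists_pow_mul_of_le_order _ g hg (e j) hcast.le
    have hhj : h (e j) ≠ 0 := by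
      obtain ⟨u, hu, hu0, huz⟩ := ((hg.analyticAt (e j)).analyticOrderAt_eq_natCast).1 hcast.symm
      have hev : u =ᶠ[𝓝[≠] (e j)] h := by
        filter_upwards [huz.filter_mono nhdsWithin_le_nhds, self_mem_nhdsWithin] with z hz hz'
        rw [hgh z, smul_eq_mul] at hz
        exact (mul_left_cancel₀ (pow_ne_zero _ (sub_ne_zero.2 hz')) hz).symm
      have := tendsto_nhds_unique
        ((hu.continuousAt.tendsto.mono_left nhdsWithin_le_nhds).congr' hev)
        (hh.continuous.continuousAt.tendsto.mono_left nhdsWithin_le_nhds)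
      rwa [← this]
    refine ⟨h, hh, fun z => ?_, fun i hi => ?_⟩
    · rw [Finset.prod_insert hj, hfac z, hgh z]; ring
    · rcases Finset.mem_insert.1 hi with rfl | hi
      · exact hhj
      · intro h0
        apply hne i hi
        rw [hgh, h0, mul_zero]

/-! ### Zeros of entire functions of order at most one -/

/-- Dividing the zeros of modulus at most `R` out of `f`, through the factors `1 - z / e i`,
leaves an entire function that on `|z| ≤ 4 R` is smaller than the bound for `f` by a factor `3` per
zero: on the circle `|z| = 4 R` each divided factor has modulus at least `3`, and the maximum
principle extends the estimate to the disc. -/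
lemma exists_normalized_factor {ι : Type*} {f : ℂ → ℂ} (hf : Differentiable ℂ f) (h0 : f 0 = 1)
    {a C : ℝ} (hgr : ∀ z, ‖f z‖ ≤ Real.exp (C * (1 + ‖z‖) ^ a))
    {e : ι → ℂ} (he : Function.Injective e) (hz : ∀ i, f (e i) = 0)
    (S : Finset ι) {R : ℝ} (hR : 0 < R) (hS : ∀ i ∈ S, ‖e i‖ ≤ R) :
    ∃ g : ℂ → ℂ, Differentiable ℂ g ∧ g 0 = 1 ∧
      (∀ z, f z = (∏ i ∈ S, (1 - z / e i) ^ (analyticOrderNatAt f (e i))) * g z) ∧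
      (∀ i ∈ S, g (e i) ≠ 0) ∧
      ∀ z, ‖z‖ ≤ 4 * R → ‖g z‖ * 3 ^ (∑ i ∈ S, analyticOrderNatAt f (e i)) ≤
        Real.exp (C * (1 + 4 * R) ^ a) := by
  have he0 : ∀ i, e i ≠ 0 := by
    intro i h
    have := hz i
    rw [h, h0] at this
    exact one_ne_zero this
  obtain ⟨g, hg, hfac, hne⟩ := exists_factor hf (a := 0) (by rw [h0]; exact one_ne_zero) he S
  set K : ℂ := ∏ i ∈ S, (- e i) ^ (analyticOrderNatAt f (e i)) with hK
  have hK0 : K ≠ 0 := Finset.prod_ne_zero_iff.2 fun i _ => pow_ne_zero _ (neg_ne_zero.2 (he0 i))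
  have hfac' : ∀ z, f z = (∏ i ∈ S, (1 - z / e i) ^ (analyticOrderNatAt f (e i))) * (K * g z) := by
    intro z
    rw [hfac z, ← mul_assoc, hK, ← Finset.prod_mul_distrib]
    congr 1
    refine Finset.prod_congr rfl fun i _ => ?_
    rw [← mul_pow]
    congr 1
    have := he0 i
    field_simp; ring
  have hd : Differentiable ℂ (fun z => K * g z) := by fun_prop
  refine ⟨fun z => K * g z, hd, ?_, hfac', fun i hi => mul_ne_zero hK0 (hne i hi), ?_⟩
  · have := hfac' 0
    rw [h0] at this
    simpa using this.symm
  · intro z hz'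
    set n := ∑ i ∈ S, analyticOrderNatAt f (e i) with hn
    rw [← le_div_iff₀ (by positivity)]
    refine Complex.norm_le_of_forall_mem_frontier_norm_le (U := Metric.ball (0 : ℂ) (4 * R))
      Metric.isBounded_ball hd.diffContOnCl ?_ ?_
    · intro w hw
      rw [frontier_ball _ (by positivity)] at hw
      have hw : ‖w‖ = 4 * R := by simpa using hw
      rw [le_div_iff₀ (by positivity)]
      calc ‖K * g w‖ * 3 ^ n
          ≤ ‖K * g w‖ * ‖∏ i ∈ S, (1 - w / e i) ^ (analyticOrderNatAt f (e i))‖ := by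
            gcongr
            rw [hn, ← Finset.prod_pow_eq_pow_sum, norm_prod]
            refine Finset.prod_le_prod (fun _ _ => by positivity) fun i hi => ?_
            rw [norm_pow]
            gcongr
            have h1 : 4 ≤ ‖w / e i‖ := by
              rw [norm_div, le_div_iff₀ (norm_pos_iff.2 (he0 i)), hw]
              linarith [hS i hi]
            have h2 := norm_sub_norm_le (w / e i) 1
            rw [norm_sub_rev] at h2
            simp at h2 h1 ⊢
            linarith
        _ = ‖f w‖ := by rw [mul_comm, ← norm_mul, ← hfac' w]
        _ ≤ _ := by rw [← hw]; exact hgr w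
    · rw [closure_ball _ (by positivity)]
      simpa using hz'

/-- Jensen-type count: an entire function of growth exponent `a` has `O(R^a)` zeros, with
multiplicity, of modulus at most `R`. -/
lemma sum_order_le {ι : Type*} {f : ℂ → ℂ} (hf : Differentiable ℂ f) (h0 : f 0 = 1)
    {a C : ℝ} (hgr : ∀ z, ‖f z‖ ≤ Real.exp (C * (1 + ‖z‖) ^ a))
    {e : ι → ℂ} (he : Function.Injective e) (hz : ∀ i, f (e i) = 0)
    (S : Finset ι) {R : ℝ} (hR : 0 < R) (hS : ∀ i ∈ S, ‖e i‖ ≤ R) :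
    ((∑ i ∈ S, analyticOrderNatAt f (e i) : ℕ) : ℝ) ≤ C * (1 + 4 * R) ^ a := by
  obtain ⟨g, -, hg0, -, -, hb⟩ := exists_normalized_factor hf h0 hgr he hz S hR hS
  have h1 := hb 0 (by simp; positivity)
  rw [hg0, norm_one, one_mul] at h1
  have h2 : Real.exp ((∑ i ∈ S, analyticOrderNatAt f (e i) : ℕ) : ℝ) ≤
      3 ^ (∑ i ∈ S, analyticOrderNatAt f (e i)) := by
    rw [← Real.exp_one_pow]
    gcongr
    exact Real.exp_one_lt_three.le
  exact Real.exp_le_exp.1 (h2.trans h1)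

lemma one_le_order {f : ℂ → ℂ} (hf : Differentiable ℂ f) (h0 : f 0 = 1) {w : ℂ} (hw : f w = 0) :
    1 ≤ analyticOrderNatAt f w := by
  have htop := analyticOrderAt_ne_top_of_entire hf (a := 0) (by simp [h0]) w
  have h1 := (hf.analyticAt w).analyticOrderAt_ne_zero.2 hw
  rw [← Nat.cast_analyticOrderNatAt htop] at h1
  exact Nat.one_le_iff_ne_zero.2 (by exact_mod_cast h1)

lemma finite_norm_le {ι : Type*} {f : ℂ → ℂ} (hf : Differentiable ℂ f) (h0 : f 0 = 1)
    {a C : ℝ} (hgr : ∀ z, ‖f z‖ ≤ Real.exp (C * (1 + ‖z‖) ^ a))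
    {e : ι → ℂ} (he : Function.Injective e) (hz : ∀ i, f (e i) = 0) {R : ℝ} (hR : 0 < R) :
    {i | ‖e i‖ ≤ R}.Finite := by
  by_contra hinf
  obtain ⟨N, hN⟩ := exists_nat_gt (C * (1 + 4 * R) ^ a)
  obtain ⟨S, hS, hcard⟩ := Set.Infinite.exists_subset_card_eq hinf N
  have h1 := sum_order_le hf h0 hgr he hz S hR (fun i hi => hS hi)
  have h2 : S.card ≤ ∑ i ∈ S, analyticOrderNatAt f (e i) := by
    rw [Finset.card_eq_sum_ones]
    exact Finset.sum_le_sum fun i _ => one_le_order hf h0 (hz i)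
  rw [hcard] at h2
  have : (N : ℝ) ≤ _ := (Nat.cast_le.2 h2).trans h1
  linarith

/-- Zeros of an entire function of order at most one: `∑ m(ρ) (1 + |ρ|)^{-σ}` converges. -/
lemma summable_order {ι : Type*} {f : ℂ → ℂ} (hf : Differentiable ℂ f) (h0 : f 0 = 1)
    (hgr : ∀ a : ℝ, 1 < a → ∃ C : ℝ, 0 < C ∧ ∀ z, ‖f z‖ ≤ Real.exp (C * (1 + ‖z‖) ^ a))
    {e : ι → ℂ} (he : Function.Injective e) (hz : ∀ i, f (e i) = 0) {σ : ℝ} (hσ : 1 < σ) :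
    Summable fun i => (analyticOrderNatAt f (e i) : ℝ) * (1 + ‖e i‖) ^ (-σ) := by
  classical
  obtain ⟨a, ha, haσ⟩ := exists_between hσ
  obtain ⟨C, hC, hgr⟩ := hgr a ha
  -- dyadic level of the zero `e i`
  set k : ι → ℕ := fun i => ⌈Real.logb 2 (1 + ‖e i‖)⌉₊ with hk
  have hk1 : ∀ i, 1 + ‖e i‖ ≤ 2 ^ (k i) := by
    intro i
    rw [← Real.rpow_natCast, ← Real.logb_le_iff_le_rpow (by norm_num) (by positivity)]
    exact Nat.le_ceil _
  have hk2 : ∀ i, (2 : ℝ) ^ (k i) ≤ 2 * (1 + ‖e i‖) := by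
    intro i
    rw [← Real.rpow_natCast, ← Real.le_logb_iff_rpow_le (by norm_num) (by positivity),
      Real.logb_mul (by norm_num) (by positivity), Real.logb_self_eq_one (by norm_num)]
    have := Nat.ceil_lt_add_one (a := Real.logb 2 (1 + ‖e i‖))
      (Real.logb_nonneg (by norm_num) (by linarith [norm_nonneg (e i)]))
    linarith
  set q : ℝ := 2 ^ (a - σ) with hq
  have hq0 : 0 < q := by positivity
  have hq1 : q < 1 := Real.rpow_lt_one_of_one_lt_of_neg (by norm_num) (by linarith)
  have hgeo : Summable fun n : ℕ => q ^ n := summable_geometric_of_lt_one hq0.le hq1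
  refine summable_of_sum_le (c := C * 5 ^ a * 2 ^ σ * ∑' n : ℕ, q ^ n)
    (fun i => by positivity) fun S => ?_
  rw [← Finset.sum_fiberwise_of_maps_to (t := S.image k) (g := k)
    (fun i hi => Finset.mem_image_of_mem k hi)]
  calc _ ≤ ∑ n ∈ S.image k, C * 5 ^ a * 2 ^ σ * q ^ n := ?_
    _ ≤ _ := by
      rw [← Finset.mul_sum]
      gcongr
      exact hgeo.sum_le_tsum _ fun _ _ => by positivity
  refine Finset.sum_le_sum fun n _ => ?_
  calc ∑ i ∈ S with k i = n, (analyticOrderNatAt f (e i) : ℝ) * (1 + ‖e i‖) ^ (-σ)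
      ≤ ∑ i ∈ S with k i = n, (analyticOrderNatAt f (e i) : ℝ) * ((2 : ℝ) ^ n / 2) ^ (-σ) := by
        refine Finset.sum_le_sum fun i hi => ?_
        have hi := (Finset.mem_filter.1 hi).2
        gcongr ?_ * ?_
        refine Real.rpow_le_rpow_of_nonpos (by positivity) ?_ (by linarith)
        have := hk2 i
        rw [hi] at this
        linarith
    _ = ((∑ i ∈ S with k i = n, analyticOrderNatAt f (e i) : ℕ) : ℝ) *
          ((2 : ℝ) ^ n / 2) ^ (-σ) := by
        rw [← Finset.sum_mul]; push_cast; rfl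
    _ ≤ (C * (1 + 4 * 2 ^ n) ^ a) * ((2 : ℝ) ^ n / 2) ^ (-σ) := by
        gcongr
        refine sum_order_le hf h0 hgr he hz _ (by positivity) fun i hi => ?_
        have hi := (Finset.mem_filter.1 hi).2
        have := hk1 i
        rw [hi] at this
        linarith
    _ ≤ (C * (5 * 2 ^ n) ^ a) * ((2 : ℝ) ^ n / 2) ^ (-σ) := by
        gcongr
        have : (1 : ℝ) ≤ 2 ^ n := one_le_pow₀ (by norm_num)
        linarith
    _ = C * 5 ^ a * 2 ^ σ * q ^ n := by
        rw [Real.mul_rpow (by norm_num) (by positivity), Real.div_rpow (by positivity) (by norm_num),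
          Real.rpow_neg (by norm_num : (0:ℝ) ≤ 2), hq, ← Real.rpow_natCast, ← Real.rpow_natCast,
          ← Real.rpow_mul (by norm_num), ← Real.rpow_mul (by norm_num), ← Real.rpow_mul (by norm_num)]
        have : (2 : ℝ) ^ ((a - σ) * n) = 2 ^ (n * a) * 2 ^ (n * -σ) := by
          rw [← Real.rpow_add (by norm_num)]; ring_nf
        rw [this, div_inv_eq_mul]; ring

/-- Away from the points `e i`, the distances `|z - e i|` and `1 + |e i|` are comparable. -/
lemma exists_one_add_norm_le {ι : Type*} {e : ι → ℂ} {z : ℂ} {δ : ℝ} (hδ : 0 < δ)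
    (h : ∀ i, δ ≤ ‖z - e i‖) : ∃ K : ℝ, 0 < K ∧ ∀ i, 1 + ‖e i‖ ≤ K * ‖z - e i‖ := by
  refine ⟨1 + (1 + ‖z‖) / δ, by positivity, fun i => ?_⟩
  have h1 : ‖e i‖ ≤ ‖z‖ + ‖z - e i‖ := by
    have := norm_sub_le z (z - e i)
    simpa using this
  have h2 : 1 + ‖z‖ ≤ (1 + ‖z‖) / δ * ‖z - e i‖ := by
    rw [div_mul_eq_mul_div, le_div_iff₀ hδ]
    gcongr
    exact h i
  linarith

lemma summable_order_rpow {ι : Type*} {f : ℂ → ℂ} (hf : Differentiable ℂ f) (h0 : f 0 = 1)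
    (hgr : ∀ a : ℝ, 1 < a → ∃ C : ℝ, 0 < C ∧ ∀ z, ‖f z‖ ≤ Real.exp (C * (1 + ‖z‖) ^ a))
    {e : ι → ℂ} (he : Function.Injective e) (hz : ∀ i, f (e i) = 0) {σ : ℝ} (hσ : 1 < σ)
    {z : ℂ} {δ : ℝ} (hδ : 0 < δ) (h : ∀ i, δ ≤ ‖z - e i‖) :
    Summable fun i => (analyticOrderNatAt f (e i) : ℝ) * ‖z - e i‖ ^ (-σ) := by
  obtain ⟨K, hK, hKb⟩ := exists_one_add_norm_le hδ h
  refine Summable.of_nonneg_of_le (fun i => by positivity) (fun i => ?_)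
    ((summable_order hf h0 hgr he hz hσ).mul_left (K ^ σ))
  have hp : 0 < ‖z - e i‖ := hδ.trans_le (h i)
  have h1 : ‖z - e i‖ ^ (-σ) = K ^ σ * (K * ‖z - e i‖) ^ (-σ) := by
    rw [Real.mul_rpow hK.le hp.le, Real.rpow_neg hK.le, ← mul_assoc, mul_inv_cancel₀ (by positivity),
      one_mul]
  rw [h1, mul_left_comm]
  gcongr K ^ σ * (_ * ?_)
  exact Real.rpow_le_rpow_of_nonpos (by positivity) (hKb i) (by linarith)

/-- Partial fractions `∑ m(ρ) (z - ρ)⁻²` of minus the second logarithmic derivative of an entire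
function of order at most one. After the zeros of modulus at most `n + 1` are divided out, the
remaining factor is zero-free on a disc of that radius and contributes `O(n^(3/2) / n²)`. -/
theorem hasSum_inv_sub_sq {ι : Type*} {f : ℂ → ℂ} (hf : Differentiable ℂ f) (h0 : f 0 = 1)
    (hgr : ∀ a : ℝ, 1 < a → ∃ C : ℝ, 0 < C ∧ ∀ z, ‖f z‖ ≤ Real.exp (C * (1 + ‖z‖) ^ a))
    {e : ι → ℂ} (he : Function.Injective e) (hz : ∀ w, f w = 0 ↔ w ∈ Set.range e)
    {z : ℂ} (hfz : f z ≠ 0) {δ : ℝ} (hδ : 0 < δ) (hzδ : ∀ i, δ ≤ ‖z - e i‖) :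
    HasSum (fun i => (analyticOrderNatAt f (e i) : ℂ) * ((z - e i) ^ 2)⁻¹)
      (- deriv (logDeriv f) z) := by
  classical
  have hz' : ∀ i, f (e i) = 0 := fun i => (hz _).2 ⟨i, rfl⟩
  have he0 : ∀ i, e i ≠ 0 := by
    intro i h
    have := hz' i
    rw [h, h0] at this
    exact one_ne_zero this
  have hsum : Summable (fun i => (analyticOrderNatAt f (e i) : ℂ) * ((z - e i) ^ 2)⁻¹) := by
    refine Summable.of_norm ((summable_order_rpow hf h0 hgr he hz' one_lt_two hδ hzδ).congr ?_)
    intro i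
    simp
  -- any exponent in `(1, 2)` makes the contribution of the zero-free factor vanish in the limit
  obtain ⟨C, hC, hgC⟩ := hgr (3 / 2) (by norm_num)
  have hfin : ∀ n : ℕ, {i | ‖e i‖ ≤ (n + 1 : ℝ)}.Finite :=
    fun n => finite_norm_le hf h0 hgC he hz' (by positivity)
  set S : ℕ → Finset ι := fun n => (hfin n).toFinset with hS
  have hSmem : ∀ n i, i ∈ S n ↔ ‖e i‖ ≤ n + 1 := by intro n i; simp [hS]
  have hStop : Tendsto S atTop atTop := by
    refine tendsto_atTop_finset_of_monotone ?_ ?_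
    · intro m n hmn i hi
      rw [hSmem] at hi ⊢
      have : (m : ℝ) ≤ n := by exact_mod_cast hmn
      linarith
    · intro i
      obtain ⟨n, hn⟩ := exists_nat_ge ‖e i‖
      exact ⟨n, by rw [hSmem]; linarith⟩
  have key : ∀ᶠ n : ℕ in atTop,
      ‖(∑ i ∈ S n, (analyticOrderNatAt f (e i) : ℂ) * ((z - e i) ^ 2)⁻¹) + deriv (logDeriv f) z‖
        ≤ 64 * C * 4 ^ (3 / 2 : ℝ) * 2 ^ (3 / 2 : ℝ) * ((n : ℝ) + 1) ^ (-(1 / 2) : ℝ) := by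
    obtain ⟨N, hN⟩ := exists_nat_ge (4 * ‖z‖)
    filter_upwards [eventually_ge_atTop N] with n hn
    have hnN : (N : ℝ) ≤ n := by exact_mod_cast hn
    have hR : (0 : ℝ) < n + 1 := by positivity
    obtain ⟨g, hg, hg0, hfac, hge, hgb⟩ := exists_normalized_factor hf h0 hgC he hz' (S n)
      hR (fun i hi => (hSmem n i).1 hi)
    have hM : 0 < C * (1 + 4 * ((n : ℝ) + 1)) ^ (3 / 2 : ℝ) := by positivity
    have hgne : ∀ w ∈ Metric.ball (0 : ℂ) (n + 1), g w ≠ 0 := by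
      intro w hw hgw
      have : f w = 0 := by rw [hfac, hgw, mul_zero]
      obtain ⟨i, rfl⟩ := (hz w).1 this
      refine hge i ?_ hgw
      rw [hSmem]
      simpa using (Metric.mem_ball.1 hw).le
    have htool := norm_deriv_logDeriv_le (g := g) (c := 0) (R := n + 1) (z := z) hR hM
      hg.differentiableOn hgne (fun w hw => by
        rw [hg0, norm_one, mul_one]
        have h1 := hgb w (by
          have : ‖w‖ < n + 1 := by simpa using hw
          linarith)
        refine le_trans (le_mul_of_one_le_right (norm_nonneg _) (one_le_pow₀ (by norm_num))) h1)
      (by rw [sub_zero]; linarith)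
    -- logarithmic differentiation of the factorisation near `z`
    have hld : logDeriv f =ᶠ[𝓝 z] fun w =>
        (∑ i ∈ S n, (analyticOrderNatAt f (e i) : ℂ) * (w - e i)⁻¹) + logDeriv g w := by
      filter_upwards [hf.continuous.continuousAt.eventually_ne hfz] with w hw
      have hw' := hw
      rw [hfac w] at hw'
      have hP := left_ne_zero_of_mul hw'
      have hG := right_ne_zero_of_mul hw'
      have hf' : f = fun z => (∏ i ∈ S n, (1 - z / e i) ^ (analyticOrderNatAt f (e i))) * g z :=
        funext hfac
      have hwe : ∀ i, w - e i ≠ 0 := by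
        intro i h
        rw [sub_eq_zero] at h
        exact hw (h ▸ hz' i)
      have hwe' : ∀ i, 1 - w / e i ≠ 0 := by
        intro i h
        have := he0 i
        field_simp at h
        exact hwe i (by linear_combination -h)
      conv_lhs => rw [hf']
      rw [logDeriv_mul w hP hG (by fun_prop) (hg w), logDeriv_prod
        (f := fun i (z : ℂ) => (1 - z / e i) ^ (analyticOrderNatAt f (e i)))
        (fun i _ => pow_ne_zero _ (hwe' i)) (fun i _ => by fun_prop)]
      congr 1
      refine Finset.sum_congr rfl fun i _ => ?_
      rw [logDeriv_fun_pow (f := fun w : ℂ => 1 - w / e i) (x := w) (by fun_prop)]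
      congr 1
      rw [logDeriv_apply]
      have hd : HasDerivAt (fun w => 1 - w / e i) (-(1 / e i)) w := by
        simpa using ((hasDerivAt_id w).div_const (e i)).const_sub 1
      rw [hd.deriv]
      have h1 := he0 i
      have h2 := hwe i
      have h3 := hwe' i
      have h4 : e i - w ≠ 0 := by rw [← neg_sub]; exact neg_ne_zero.2 h2
      have h5 : 1 - w / e i = (e i - w) / e i := by field_simp
      rw [h5]
      field_simp
      ring
    have hgz : g z ≠ 0 := by
      intro h
      rw [hfac, h, mul_zero] at hfz
      exact hfz rfl
    have hdg : DifferentiableAt ℂ (logDeriv g) z := by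
      have h1 : AnalyticAt ℂ g z := hg.analyticAt z
      exact (h1.deriv.div h1 hgz).differentiableAt
    have hderiv : deriv (logDeriv f) z =
        (∑ i ∈ S n, (analyticOrderNatAt f (e i) : ℂ) * (-((z - e i) ^ 2)⁻¹)) +
          deriv (logDeriv g) z := by
      rw [hld.deriv_eq]
      refine HasDerivAt.deriv (HasDerivAt.add (HasDerivAt.fun_sum fun i _ => ?_) hdg.hasDerivAt)
      have h2 : z - e i ≠ 0 := by
        intro h
        rw [sub_eq_zero] at h
        exact hfz (h ▸ hz' i)
      refine HasDerivAt.const_mul _ ?_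
      have := ((hasDerivAt_id z).sub_const (e i)).fun_inv h2
      convert this using 1
      · rfl
      · simp [neg_div]
    rw [hderiv]
    have hcancel : (∑ i ∈ S n, (analyticOrderNatAt f (e i) : ℂ) * ((z - e i) ^ 2)⁻¹) +
        ((∑ i ∈ S n, (analyticOrderNatAt f (e i) : ℂ) * (-((z - e i) ^ 2)⁻¹)) +
          deriv (logDeriv g) z) = deriv (logDeriv g) z := by
      simp [mul_neg, Finset.sum_neg_distrib]
    rw [hcancel]
    refine htool.trans ?_
    have h1 : (1 + 4 * ((n : ℝ) + 1)) ^ (3 / 2 : ℝ) ≤ (4 * (2 * ((n : ℝ) + 1))) ^ (3 / 2 : ℝ) := by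
      gcongr
      linarith
    rw [div_le_iff₀ (by positivity)]
    calc 64 * (C * (1 + 4 * ((n : ℝ) + 1)) ^ (3 / 2 : ℝ))
        ≤ 64 * (C * (4 * (2 * ((n : ℝ) + 1))) ^ (3 / 2 : ℝ)) := by gcongr
      _ = 64 * C * 4 ^ (3 / 2 : ℝ) * 2 ^ (3 / 2 : ℝ) * ((n : ℝ) + 1) ^ (3 / 2 : ℝ) := by
          rw [Real.mul_rpow (by norm_num) (by positivity), Real.mul_rpow (by norm_num) (by positivity)]
          ring
      _ = _ := by
          have : ((n : ℝ) + 1) ^ (3 / 2 : ℝ) =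
              ((n : ℝ) + 1) ^ (-(1 / 2) : ℝ) * ((n : ℝ) + 1) ^ 2 := by
            rw [← Real.rpow_natCast, ← Real.rpow_add hR]; norm_num
          rw [this]; ring
  have hlim : Tendsto (fun n : ℕ =>
      64 * C * 4 ^ (3 / 2 : ℝ) * 2 ^ (3 / 2 : ℝ) * ((n : ℝ) + 1) ^ (-(1 / 2) : ℝ)) atTop (𝓝 0) := by
    rw [← mul_zero (64 * C * 4 ^ (3 / 2 : ℝ) * 2 ^ (3 / 2 : ℝ))]
    refine Tendsto.const_mul _ ?_
    exact (tendsto_rpow_neg_atTop (by norm_num : (0 : ℝ) < 1 / 2)).comp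
      (tendsto_natCast_atTop_atTop.atTop_add tendsto_const_nhds)
  have hz0 := squeeze_zero_norm' key hlim
  have h1 : Tendsto (fun n => ∑ i ∈ S n, (analyticOrderNatAt f (e i) : ℂ) * ((z - e i) ^ 2)⁻¹)
      atTop (𝓝 (- deriv (logDeriv f) z)) := by
    have := hz0.sub_const (deriv (logDeriv f) z)
    simpa using this
  have h2 := hsum.hasSum.comp hStop
  have := tendsto_nhds_unique h2 h1
  rw [← this]
  exact hsum.hasSum

/-! ### Growth of the xi function -/

lemma Gamma_add_two_le {x : ℝ} (hx : 0 ≤ x) : Real.Gamma (x + 2) ≤ (x + 2) ^ (x + 2) := by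
  obtain ⟨n, hn⟩ : ∃ n : ℕ, n = ⌈x⌉₊ := ⟨_, rfl⟩
  have h1 : x ≤ n := by rw [hn]; exact Nat.le_ceil x
  have h2 : (n : ℝ) < x + 1 := by rw [hn]; exact Nat.ceil_lt_add_one hx
  calc Real.Gamma (x + 2) ≤ Real.Gamma ((n + 1 : ℕ) + 1) := by
        refine Real.Gamma_strictMonoOn_Ici.monotoneOn ?_ ?_ ?_
        · simp; linarith
        · simp; linarith [(Nat.cast_nonneg n : (0 : ℝ) ≤ n)]
        · push_cast; linarith
    _ = ((n + 1).factorial : ℝ) := Real.Gamma_nat_eq_factorial _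
    _ ≤ ((n + 1 : ℕ) : ℝ) ^ (n + 1) := by exact_mod_cast Nat.factorial_le_pow (n + 1)
    _ = ((n + 1 : ℕ) : ℝ) ^ ((n + 1 : ℕ) : ℝ) := by rw [Real.rpow_natCast]
    _ ≤ (x + 2) ^ ((n + 1 : ℕ) : ℝ) := by
        gcongr
        push_cast; linarith
    _ ≤ _ := by
        apply Real.rpow_le_rpow_of_exponent_le
        · linarith
        · push_cast; linarith

/-- `x ^ x` grows more slowly than the exponential of any power of `x` beyond the first. -/
lemma rpow_self_le {x ε : ℝ} (hx : 0 < x) (hε : 0 < ε) :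
    x ^ x ≤ Real.exp (ε⁻¹ * x ^ (1 + ε)) := by
  rw [Real.rpow_def_of_pos hx]
  refine Real.exp_le_exp.2 ?_
  have := Real.log_le_rpow_div hx.le hε
  rw [Real.rpow_add hx, Real.rpow_one]
  calc Real.log x * x ≤ x ^ ε / ε * x := by gcongr
    _ = _ := by field_simp

/-- `u` grows at most like `exp (C (1 + |z|)^a)` on `S`. -/
def GrowthOn (S : Set ℂ) (a : ℝ) (u : ℂ → ℝ) : Prop :=
  ∃ C : ℝ, 0 < C ∧ ∀ z ∈ S, u z ≤ Real.exp (C * (1 + ‖z‖) ^ a)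

namespace GrowthOn
variable {S : Set ℂ} {a : ℝ} {u v : ℂ → ℝ}

lemma mono (hv : GrowthOn S a v) (h : ∀ z ∈ S, u z ≤ v z) : GrowthOn S a u := by
  obtain ⟨C, hC, hv⟩ := hv
  exact ⟨C, hC, fun z hz => (h z hz).trans (hv z hz)⟩

lemma mul (hu : GrowthOn S a u) (hv : GrowthOn S a v) (hu0 : ∀ z ∈ S, 0 ≤ v z) :
    GrowthOn S a fun z => u z * v z := by
  obtain ⟨C, hC, hu⟩ := hu
  obtain ⟨D, hD, hv⟩ := hv
  refine ⟨C + D, by positivity, fun z hz => ?_⟩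
  rw [add_mul, Real.exp_add]
  exact mul_le_mul (hu z hz) (hv z hz) (hu0 z hz) (Real.exp_pos _).le

lemma one_le_rpow (ha : 1 < a) (z : ℂ) : 1 ≤ (1 + ‖z‖) ^ a :=
  Real.one_le_rpow (by linarith [norm_nonneg z]) (by linarith)

lemma one_add_le_rpow (ha : 1 < a) (z : ℂ) : 1 + ‖z‖ ≤ (1 + ‖z‖) ^ a :=
  Real.self_le_rpow_of_one_le (by linarith [norm_nonneg z]) ha.le

lemma const (ha : 1 < a) (c : ℝ) : GrowthOn S a fun _ => c := by
  refine ⟨|c| + 1, by positivity, fun z _ => ?_⟩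
  have h1 := Real.add_one_le_exp ((|c| + 1) * (1 + ‖z‖) ^ a)
  have h2 := one_le_rpow ha z
  have h3 := le_abs_self c
  nlinarith [abs_nonneg c]

lemma exp_norm (ha : 1 < a) (c : ℝ) : GrowthOn S a fun z => Real.exp (c * (1 + ‖z‖)) := by
  refine ⟨|c| + 1, by positivity, fun z _ => ?_⟩
  have h2 := one_add_le_rpow ha z
  have h3 := le_abs_self c
  have h4 := norm_nonneg z
  exact Real.exp_le_exp.2 (mul_le_mul (by linarith) h2 (by linarith) (by positivity))

lemma add (ha : 1 < a) (hu : GrowthOn S a u) (hv : GrowthOn S a v) :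
    GrowthOn S a fun z => u z + v z := by
  obtain ⟨C, hC, hu⟩ := hu
  obtain ⟨D, hD, hv⟩ := hv
  refine (GrowthOn.mul (u := fun _ => 2) (v := fun z => Real.exp ((C + D) * (1 + ‖z‖) ^ a))
    (const ha 2) ⟨C + D, by positivity, fun z _ => le_rfl⟩ fun z _ => (Real.exp_pos _).le).mono
    fun z hz => ?_
  have h1 := one_le_rpow ha z
  have h2 : Real.exp (C * (1 + ‖z‖) ^ a) ≤ Real.exp ((C + D) * (1 + ‖z‖) ^ a) := by
    gcongr; linarith
  have h3 : Real.exp (D * (1 + ‖z‖) ^ a) ≤ Real.exp ((C + D) * (1 + ‖z‖) ^ a) := by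
    gcongr; linarith
  linarith [hu z hz, hv z hz]

lemma norm (ha : 1 < a) : GrowthOn S a fun z => ‖z‖ :=
  (exp_norm ha 1).mono fun z _ => by linarith [Real.add_one_le_exp (1 * (1 + ‖z‖))]

end GrowthOn

/-- Growth of the Mellin transform of an exponentially decaying function in a right half-plane. -/
lemma growthOn_mellin {g : ℝ → ℂ} {p : ℝ} (hp : 0 < p)
    (hg : g =O[atTop] fun x => Real.exp (-p * x)) (hconv : ∀ s, MellinConvergent g s)
    {a : ℝ} (ha : 1 < a) :
    GrowthOn {z | 1 / 2 ≤ z.re} a fun z => ‖mellin g (z / 2)‖ := by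
  obtain ⟨C, hC⟩ := hg.bound
  obtain ⟨X₁, hX₁⟩ := eventually_atTop.1 hC
  set X := max X₁ 1 with hX
  have hX1 : 1 ≤ X := le_max_right _ _
  have hCX : ∀ x, X ≤ x → ‖g x‖ ≤ |C| * Real.exp (-p * x) := by
    intro x hx
    have := hX₁ x ((le_max_left _ _).trans hx)
    rw [Real.norm_of_nonneg (Real.exp_pos _).le] at this
    refine this.trans ?_
    gcongr
    exact le_abs_self C
  -- the integrand is compared with that at abscissa `1 / 4` for `x ≤ X` and with a Gamma integral
  -- for `x ≥ X`
  set J := ∫ x in Set.Ioi (0 : ℝ), x ^ (1 / 4 - 1 : ℝ) * ‖g x‖ with hJ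
  have hnorm : ∀ s : ℂ, ∀ x ∈ Set.Ioi (0 : ℝ),
      ‖(x : ℂ) ^ (s - 1) • g x‖ = x ^ (s.re - 1) * ‖g x‖ := by
    intro s x hx
    rw [norm_smul, Complex.norm_cpow_eq_rpow_re_of_pos hx]; simp
  have hJint : MeasureTheory.IntegrableOn (fun x : ℝ => x ^ (1 / 4 - 1 : ℝ) * ‖g x‖)
      (Set.Ioi 0) := by
    have h1 : MeasureTheory.IntegrableOn (fun x : ℝ => ‖(x : ℂ) ^ ((1 / 4 : ℂ) - 1) • g x‖)
        (Set.Ioi 0) := (hconv (1 / 4 : ℂ)).norm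
    refine h1.congr_fun (fun x hx => ?_) measurableSet_Ioi
    have h2 := hnorm (1 / 4) x hx
    simp only [h2]
    norm_num
  have hmain : ∀ z ∈ {z : ℂ | 1 / 2 ≤ z.re}, ‖mellin g (z / 2)‖ ≤
      Real.exp (Real.log X * (1 + ‖z‖)) * J + |C| * (Real.exp (|Real.log p| * (1 + ‖z‖)) *
        (4 * Real.exp ((a - 1)⁻¹ * (2 * (1 + ‖z‖)) ^ a))) := by
    intro z hz
    have hz : 1 / 2 ≤ z.re := hz
    set σ := (z / 2).re with hσ
    have hσ' : σ = z.re / 2 := by simp [hσ]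
    have hσ4 : 1 / 4 ≤ σ := by rw [hσ']; linarith
    have hσz : σ ≤ ‖z‖ := by
      have := Complex.re_le_norm z
      rw [hσ']; linarith
    have hgam : MeasureTheory.IntegrableOn (fun x : ℝ => x ^ (σ - 1) * Real.exp (-(p * x)))
        (Set.Ioi 0) := by
      have := integrableOn_rpow_mul_exp_neg_mul_rpow (s := σ - 1) (p := 1) (b := p)
        (by linarith) one_pos hp
      simpa using this
    have h1 : ‖mellin g (z / 2)‖ ≤ ∫ x in Set.Ioi (0 : ℝ),
        (X ^ (σ - 1 / 4) * (x ^ (1 / 4 - 1 : ℝ) * ‖g x‖) +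
          |C| * (x ^ (σ - 1) * Real.exp (-(p * x)))) := by
      rw [mellin]
      refine MeasureTheory.norm_integral_le_of_norm_le
        ((hJint.const_mul _).add (hgam.const_mul _)) ?_
      refine (MeasureTheory.ae_restrict_iff' measurableSet_Ioi).2 (MeasureTheory.ae_of_all _ fun x hx => ?_)
      rw [hnorm _ x hx]
      have hx : 0 < x := hx
      rcases le_total x X with hxX | hxX
      · have : x ^ (σ - 1) = x ^ (σ - 1 / 4) * x ^ (1 / 4 - 1 : ℝ) := by
          rw [← Real.rpow_add hx]; ring_nf
        rw [← hσ, this, mul_assoc]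
        refine le_add_of_le_of_nonneg ?_ (by positivity)
        gcongr
      · refine le_add_of_nonneg_of_le (by positivity) ?_
        have := hCX x hxX
        rw [neg_mul] at this
        rw [mul_left_comm]
        gcongr
    have hJ0 : 0 ≤ J := MeasureTheory.setIntegral_nonneg measurableSet_Ioi fun x hx => by
      have hx : 0 < x := hx
      positivity
    refine h1.trans ?_
    rw [MeasureTheory.integral_add (hJint.const_mul _) (hgam.const_mul _),
      MeasureTheory.integral_const_mul, MeasureTheory.integral_const_mul,
      Real.integral_rpow_mul_exp_neg_mul_Ioi (by linarith) hp]
    gcongr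
    · rw [Real.rpow_def_of_pos (by linarith)]
      gcongr
      · exact Real.log_nonneg hX1
      · linarith
    · rw [Real.rpow_def_of_pos (by positivity)]
      rw [one_div, Real.log_inv]
      gcongr
      · exact neg_le_abs _
      · linarith
    · have e1 : Real.Gamma (σ + 2) = (σ + 1) * (σ * Real.Gamma σ) := by
        rw [← Real.Gamma_add_one (by linarith), ← Real.Gamma_add_one (by linarith)]
        ring_nf
      have e2 := Gamma_add_two_le (x := σ) (by linarith)
      have e3 := rpow_self_le (x := σ + 2) (ε := a - 1) (by linarith) (by linarith)
      have e4 : (σ + 2) ^ (1 + (a - 1)) ≤ (2 * (1 + ‖z‖)) ^ a := by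
        rw [add_sub_cancel]
        gcongr
        linarith
      have e5 : 0 < Real.Gamma σ := Real.Gamma_pos_of_pos (by linarith)
      have e6 : Real.exp ((a - 1)⁻¹ * (σ + 2) ^ (1 + (a - 1))) ≤
          Real.exp ((a - 1)⁻¹ * (2 * (1 + ‖z‖)) ^ a) := by
        have : 0 < (a - 1)⁻¹ := inv_pos.2 (by linarith)
        gcongr
      have e7 : Real.Gamma σ ≤ 4 * ((σ + 1) * (σ * Real.Gamma σ)) := by
        have : 1 ≤ 4 * ((σ + 1) * σ) := by nlinarith
        nlinarith
      rw [e1] at e2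
      linarith
  have hgA : GrowthOn {z : ℂ | 1 / 2 ≤ z.re} a
      fun z => Real.exp ((a - 1)⁻¹ * (2 * (1 + ‖z‖)) ^ a) := by
    refine ⟨(a - 1)⁻¹ * 2 ^ a, mul_pos (inv_pos.2 (by linarith)) (by positivity), fun z _ => ?_⟩
    simp only
    rw [Real.mul_rpow (by norm_num) (by positivity), mul_assoc]
  refine GrowthOn.mono ?_ hmain
  have hJ0 : 0 ≤ J := MeasureTheory.setIntegral_nonneg measurableSet_Ioi fun x hx => by
      have hx : 0 < x := hx
      positivity
  refine GrowthOn.add ha ((GrowthOn.exp_norm ha _).mul (GrowthOn.const ha J) fun _ _ => hJ0) ?_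
  refine (GrowthOn.const ha _).mul ((GrowthOn.exp_norm ha _).mul
    ((GrowthOn.const ha 4).mul hgA ?_) ?_) ?_ <;> intros <;> positivity

/-- The Mellin transform defining the entire completed zeta function is that of the theta kernel
with its constant term at infinity removed on `x > 1`, which decays exponentially. -/
lemma completedRiemannZeta₀_eq_mellin (s : ℂ) :
    completedRiemannZeta₀ s =
      mellin (HurwitzZeta.hurwitzEvenFEPair 0).f_modif (s / 2) / 2 := rfl

lemma growthOn_completedRiemannZeta₀ {a : ℝ} (ha : 1 < a) :
    GrowthOn {z | 1 / 2 ≤ z.re} a fun z => ‖completedRiemannZeta₀ z‖ := by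
  obtain ⟨p, hp, hO⟩ := HurwitzZeta.isBigO_atTop_evenKernel_sub 0
  have h1 : (HurwitzZeta.hurwitzEvenFEPair 0).f_modif =O[atTop] fun x => Real.exp (-p * x) := by
    have h2 : (fun x => ((HurwitzZeta.evenKernel 0 x - (if (0 : UnitAddCircle) = 0 then 1 else 0)
        : ℝ) : ℂ)) =O[atTop] fun x => Real.exp (-p * x) := by
      rw [← Asymptotics.isBigO_norm_left]
      simp only [Complex.norm_real, if_true]
      simpa using hO.norm_left
    refine h2.congr' ?_ EventuallyEq.rfl
    filter_upwards [eventually_gt_atTop 1] with x hx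
    simp [WeakFEPair.f_modif, hx, not_lt.2 hx.le, HurwitzZeta.hurwitzEvenFEPair]
  refine ((growthOn_mellin hp h1 (fun s => ?_) ha).mul (GrowthOn.const ha (1 / 2)) (by
    intros; positivity)).mono fun z _ => ?_
  · exact ((HurwitzZeta.hurwitzEvenFEPair 0).isStrongFEPair_toStrongFEPair.hasMellin s).1
  · rw [completedRiemannZeta₀_eq_mellin, norm_div]
    simp [div_eq_mul_inv]

/-- Riemann's entire function `z (z - 1) π^{-z/2} Γ(z/2) ζ(z)`, normalised to equal `1` at `0`. -/
noncomputable def xi (z : ℂ) : ℂ := z * (z - 1) * completedRiemannZeta₀ z + 1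

lemma differentiable_xi : Differentiable ℂ xi := by
  unfold xi
  have := differentiable_completedZeta₀
  fun_prop

lemma xi_zero : xi 0 = 1 := by simp [xi]

lemma xi_one_sub (z : ℂ) : xi (1 - z) = xi z := by
  simp only [xi, completedRiemannZeta₀_one_sub]; ring

lemma xi_eq {z : ℂ} (h0 : z ≠ 0) (h1 : z ≠ 1) : xi z = z * (z - 1) * completedRiemannZeta z := by
  have h2 : 1 - z ≠ 0 := sub_ne_zero.2 h1.symm
  rw [xi, completedRiemannZeta_eq]
  field_simp
  ring

/-- `xi` has order at most one. The Mellin representation controls `Re z ≥ 1/2`, and the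
functional equation the remaining half-plane. -/
lemma xi_growth (a : ℝ) (ha : 1 < a) :
    ∃ C : ℝ, 0 < C ∧ ∀ z, ‖xi z‖ ≤ Real.exp (C * (1 + ‖z‖) ^ a) := by
  have h1 : GrowthOn {z | 1 / 2 ≤ z.re} a fun z => ‖xi z‖ := by
    refine GrowthOn.mono (v := fun z => ‖z‖ * (‖z‖ + 1) * ‖completedRiemannZeta₀ z‖ + 1)
      (GrowthOn.add ha (((GrowthOn.norm ha).mul ((GrowthOn.norm ha).add ha (GrowthOn.const ha 1))
      ?_).mul (growthOn_completedRiemannZeta₀ ha) ?_) (GrowthOn.const ha 1)) fun z _ => ?_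
    · intros; positivity
    · intros; positivity
    · rw [xi]
      refine (norm_add_le _ _).trans ?_
      rw [norm_mul, norm_mul, norm_one]
      gcongr
      simpa using norm_sub_le z 1
  obtain ⟨C, hC, h⟩ := h1
  refine ⟨C * 2 ^ a, by positivity, fun z => ?_⟩
  rw [mul_assoc, ← Real.mul_rpow (by norm_num) (by positivity)]
  rcases le_total (1 / 2) z.re with hz | hz
  · refine (h z hz).trans ?_
    gcongr
    linarith [norm_nonneg z]
  · rw [← xi_one_sub]
    refine (h (1 - z) (by simp; linarith)).trans ?_
    gcongr
    have := norm_sub_le 1 z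
    rw [norm_one] at this
    linarith [norm_nonneg z]

/-! ### Zeros of the xi function -/

lemma differentiableAt_Gammaℝ {z : ℂ} (hz : 0 < z.re) : DifferentiableAt ℂ Gammaℝ z := by
  have h := (differentiable_Gammaℝ_inv z).fun_inv (inv_ne_zero (Gammaℝ_ne_zero_of_re_pos hz))
  simpa using h

lemma xi_eq_zeta {z : ℂ} (hz : 0 < z.re) (h1 : z ≠ 1) :
    xi z = z * (z - 1) * Gammaℝ z * riemannZeta z := by
  have h0 : z ≠ 0 := by rintro rfl; simp at hz
  rw [xi_eq h0 h1, riemannZeta_def_of_ne_zero h0]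
  have := Gammaℝ_ne_zero_of_re_pos hz
  field_simp

lemma xi_ne_zero_of_one_le_re {z : ℂ} (hz : 1 ≤ z.re) : xi z ≠ 0 := by
  by_cases h1 : z = 1
  · rw [← xi_one_sub, h1, sub_self, xi_zero]; exact one_ne_zero
  · have h0 : z ≠ 0 := by rintro rfl; norm_num at hz
    rw [xi_eq_zeta (by linarith) h1]
    exact mul_ne_zero (mul_ne_zero (mul_ne_zero h0 (sub_ne_zero.2 h1))
      (Gammaℝ_ne_zero_of_re_pos (by linarith))) (riemannZeta_ne_zero_of_one_le_re hz)

lemma xi_eq_zero_iff (w : ℂ) :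
    xi w = 0 ↔ w ∈ Set.range (Subtype.val : NontrivialZeros → ℂ) := by
  have hr : w ∈ Set.range (Subtype.val : NontrivialZeros → ℂ) ↔
      riemannZeta w = 0 ∧ 0 < w.re ∧ w.re < 1 :=
    ⟨fun ⟨ρ, h⟩ => h ▸ ρ.2, fun h => ⟨⟨w, h⟩, rfl⟩⟩
  rw [hr]
  constructor
  · intro h
    have h1 : w.re < 1 := by
      by_contra hc
      exact xi_ne_zero_of_one_le_re (not_lt.1 hc) h
    have h2 : 0 < w.re := by
      by_contra hc
      rw [← xi_one_sub] at h
      exact xi_ne_zero_of_one_le_re (by simp; linarith) h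
    have hw1 : w ≠ 1 := by rintro rfl; simp at h1
    have hw0 : w ≠ 0 := by rintro rfl; simp at h2
    rw [xi_eq_zeta h2 hw1] at h
    refine ⟨?_, h2, h1⟩
    simpa [hw0, sub_ne_zero.2 hw1, Gammaℝ_ne_zero_of_re_pos h2] using h
  · rintro ⟨h, h2, h1⟩
    have hw1 : w ≠ 1 := by rintro rfl; simp at h1
    rw [xi_eq_zeta h2 hw1, h, mul_zero]

/-- For an analytic function that is not locally zero, `vanishingOrder` is Mathlib's order of
vanishing. -/
lemma vanishingOrder_eq {f : ℂ → ℂ} {w : ℂ} (hf : AnalyticAt ℂ f w)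
    (htop : analyticOrderAt f w ≠ ⊤) : vanishingOrder f w = analyticOrderNatAt f w := by
  have h := (analyticOrderAt_eq_nat_iff_iteratedDeriv_eq_zero hf
    (n := analyticOrderNatAt f w)).1 (Nat.cast_analyticOrderNatAt htop).symm
  refine le_antisymm (Nat.sInf_le h.2) ?_
  by_contra hc
  have h3 : vanishingOrder f w ∈ {n : ℕ | iteratedDeriv n f w ≠ 0} := Nat.sInf_mem ⟨_, h.2⟩
  exact h3 (h.1 _ (not_le.1 hc))

/-- The factor `z (z - 1) Γ_ℝ(z)` relating `xi` and `ζ` has neither zeros nor poles in the critical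
strip, so the multiplicities agree. -/
lemma order_xi_eq (ρ : NontrivialZeros) :
    analyticOrderNatAt xi ρ.1 = vanishingOrder riemannZeta ρ.1 := by
  obtain ⟨w, hw, h2, h1⟩ := ρ
  have hw1 : w ≠ 1 := by rintro rfl; simp at h1
  have hw0 : w ≠ 0 := by rintro rfl; simp at h2
  have hopen : IsOpen {z : ℂ | 0 < z.re ∧ z ≠ 1} :=
    (isOpen_lt continuous_const Complex.continuous_re).inter isOpen_ne
  have hmem : {z : ℂ | 0 < z.re ∧ z ≠ 1} ∈ 𝓝 w := hopen.mem_nhds ⟨h2, hw1⟩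
  have hz : AnalyticAt ℂ riemannZeta w :=
    DifferentiableOn.analyticAt (s := {z : ℂ | 0 < z.re ∧ z ≠ 1})
      (fun z hz => (differentiableAt_riemannZeta hz.2).differentiableWithinAt) hmem
  have hF : AnalyticAt ℂ (fun z => z * (z - 1) * Gammaℝ z) w := by
    refine DifferentiableOn.analyticAt (s := {z : ℂ | 0 < z.re ∧ z ≠ 1}) (fun z hz => ?_) hmem
    have := differentiableAt_Gammaℝ hz.1
    exact DifferentiableAt.differentiableWithinAt (by fun_prop)
  have hF0 : w * (w - 1) * Gammaℝ w ≠ 0 :=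
    mul_ne_zero (mul_ne_zero hw0 (sub_ne_zero.2 hw1)) (Gammaℝ_ne_zero_of_re_pos h2)
  have hev : xi =ᶠ[𝓝 w] (fun z => z * (z - 1) * Gammaℝ z) * riemannZeta := by
    filter_upwards [hmem] with z hz
    exact xi_eq_zeta hz.1 hz.2
  have hord : analyticOrderAt xi w = analyticOrderAt riemannZeta w := by
    rw [analyticOrderAt_congr hev, analyticOrderAt_mul hF hz, hF.analyticOrderAt_eq_zero.2 hF0,
      zero_add]
  have htop := analyticOrderAt_ne_top_of_entire differentiable_xi (a := 0) (by simp [xi_zero]) w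
  simp only
  rw [vanishingOrder_eq hz (hord ▸ htop), analyticOrderNatAt, analyticOrderNatAt, hord]

lemma re_sub_le_norm {z : ℂ} (ρ : NontrivialZeros) : z.re - 1 ≤ ‖z - ρ.1‖ := by
  have := Complex.re_le_norm (z - ρ.1)
  have h := ρ.2.2.2
  simp at this
  linarith

/-- Absolute convergence of the sum over the non-trivial zeros. -/
lemma summable_zeros {z : ℂ} (hz : 1 < z.re) {σ : ℝ} (hσ : 1 < σ) :
    Summable fun ρ : NontrivialZeros =>
      (vanishingOrder riemannZeta ρ.1 : ℝ) * ‖z - ρ.1‖ ^ (-σ) := by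
  simp_rw [← order_xi_eq]
  exact summable_order_rpow differentiable_xi xi_zero xi_growth Subtype.val_injective
    (fun i => (xi_eq_zero_iff _).2 ⟨i, rfl⟩) hσ (sub_pos.2 hz) (fun i => re_sub_le_norm i)

/-- The partial fractions of minus the second logarithmic derivative of `xi`, indexed by the
non-trivial zeros of `ζ`. -/
lemma hasSum_zeros {z : ℂ} (hz : 1 < z.re) :
    HasSum (fun ρ : NontrivialZeros =>
      (vanishingOrder riemannZeta ρ.1 : ℂ) * ((z - ρ.1) ^ 2)⁻¹) (-deriv (logDeriv xi) z) := by
  simp_rw [← order_xi_eq]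
  exact hasSum_inv_sub_sq differentiable_xi xi_zero xi_growth Subtype.val_injective
    xi_eq_zero_iff (xi_ne_zero_of_one_le_re hz.le) (sub_pos.2 hz) (fun i => re_sub_le_norm i)

/-- Countability is what allows sums over the zeros to be integrated termwise. -/
instance : Countable NontrivialZeros := by
  have h := summable_order differentiable_xi xi_zero xi_growth
    (Subtype.val_injective : Function.Injective (Subtype.val : NontrivialZeros → ℂ))
    (fun i => (xi_eq_zero_iff _).2 ⟨i, rfl⟩) one_lt_two
  have h2 := h.countable_support
  refine Set.countable_univ_iff.1 (h2.mono fun i _ => ?_)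
  have h4 := one_le_order differentiable_xi xi_zero ((xi_eq_zero_iff _).2 ⟨i, rfl⟩)
  have h5 : (0 : ℝ) < analyticOrderNatAt xi i.1 := by exact_mod_cast h4
  exact (mul_pos h5 (by positivity)).ne'

/-! ### The trigamma series -/

lemma logDeriv_Gamma_add_one {w : ℂ} (hw : 0 < w.re) :
    logDeriv Gamma (w + 1) = logDeriv Gamma w + w⁻¹ := by
  have := digamma_apply_add_one w (fun m h => by
    rw [h] at hw; simp at hw; linarith [(Nat.cast_nonneg m : (0:ℝ) ≤ m)])
  simpa [digamma_def] using this

lemma differentiableAt_Gamma_of_re_pos {w : ℂ} (hw : 0 < w.re) : DifferentiableAt ℂ Gamma w :=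
  differentiableAt_Gamma w fun m h => by
    rw [h] at hw; simp at hw; linarith [(Nat.cast_nonneg m : (0:ℝ) ≤ m)]

lemma differentiableAt_logDeriv_Gamma {w : ℂ} (hw : 0 < w.re) :
    DifferentiableAt ℂ (logDeriv Gamma) w := by
  have hopen : IsOpen {z : ℂ | 0 < z.re} := isOpen_lt continuous_const Complex.continuous_re
  have hd : DifferentiableOn ℂ Gamma {z : ℂ | 0 < z.re} := fun z hz =>
    (differentiableAt_Gamma_of_re_pos hz).differentiableWithinAt
  have h1 : AnalyticAt ℂ Gamma w := hd.analyticAt (hopen.mem_nhds hw)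
  exact (h1.deriv.div h1 (Complex.Gamma_ne_zero_of_re_pos hw)).differentiableAt

lemma deriv_logDeriv_Gamma_add_one {w : ℂ} (hw : 0 < w.re) :
    deriv (logDeriv Gamma) w = (w ^ 2)⁻¹ + deriv (logDeriv Gamma) (w + 1) := by
  have hopen : IsOpen {z : ℂ | 0 < z.re} := isOpen_lt continuous_const Complex.continuous_re
  have hw0 : w ≠ 0 := by rintro rfl; simp at hw
  have h1 : (fun z => logDeriv Gamma (z + 1)) =ᶠ[𝓝 w] fun z => logDeriv Gamma z + z⁻¹ := by
    filter_upwards [hopen.mem_nhds hw] with z hz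
    exact logDeriv_Gamma_add_one hz
  have h2 := h1.deriv_eq
  rw [deriv_comp_add_const] at h2
  have h3 : deriv (fun z => logDeriv Gamma z + z⁻¹) w =
      deriv (logDeriv Gamma) w + -(w ^ 2)⁻¹ :=
    ((differentiableAt_logDeriv_Gamma hw).hasDerivAt.add (hasDerivAt_inv hw0)).deriv
  rw [h2, h3]; ring

lemma norm_Gamma_le {w : ℂ} (hw : 0 < w.re) : ‖Gamma w‖ ≤ Real.Gamma w.re := by
  rw [Complex.Gamma_eq_integral hw, Real.Gamma_eq_integral hw, Complex.GammaIntegral]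
  refine (MeasureTheory.norm_integral_le_integral_norm _).trans_eq ?_
  refine MeasureTheory.setIntegral_congr_fun measurableSet_Ioi fun x hx => ?_
  have hx : 0 < x := hx
  simp only [norm_mul, Complex.norm_cpow_eq_rpow_re_of_pos hx]
  rw [Complex.norm_real, Real.norm_of_nonneg (Real.exp_pos _).le]
  simp

lemma Gamma_le_of_one_le {x : ℝ} (hx : 1 ≤ x) :
    Real.Gamma x ≤ Real.exp (2 * (x + 2) ^ (3 / 2 : ℝ)) := by
  have e1 : Real.Gamma (x + 2) = (x + 1) * (x * Real.Gamma x) := by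
    rw [← Real.Gamma_add_one (by linarith), ← Real.Gamma_add_one (by linarith)]
    ring_nf
  have e2 := Gamma_add_two_le (x := x) (by linarith)
  have e3 := rpow_self_le (x := x + 2) (ε := 1 / 2) (by linarith) (by norm_num)
  have e5 : 0 < Real.Gamma x := Real.Gamma_pos_of_pos (by linarith)
  norm_num at e3
  have : 1 ≤ (x + 1) * x := by nlinarith
  nlinarith

/-- The trigamma function decays along `w + ℕ`. The bound for zero-free functions applies to
`Γ` on the disc of centre and radius proportional to `n`, where `|Γ| ≤ exp (O(n^(3/2)))`. -/
lemma tendsto_deriv_logDeriv_Gamma (w : ℂ) :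
    Tendsto (fun n : ℕ => deriv (logDeriv Gamma) (w + n)) atTop (𝓝 0) := by
  have key : ∀ᶠ n : ℕ in atTop, ‖deriv (logDeriv Gamma) (w + n)‖ ≤
      64 * (2 * 4 ^ (3 / 2 : ℝ)) * 4 * (n : ℝ) ^ (-(1 / 2) : ℝ) := by
    obtain ⟨N, hN⟩ := exists_nat_ge (8 * ‖w‖ + 4)
    filter_upwards [eventually_ge_atTop N] with n hn
    have hnN : (N : ℝ) ≤ n := by exact_mod_cast hn
    have hn4 : (4 : ℝ) ≤ n := by linarith [norm_nonneg w]
    have hn0 : (0 : ℝ) < n := by linarith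
    have hre : ∀ u ∈ Metric.ball (n : ℂ) (n / 2 : ℝ), 1 ≤ u.re ∧ u.re + 2 ≤ 4 * n := by
      intro u hu
      rw [Metric.mem_ball, dist_eq_norm] at hu
      have h1 := abs_le.1 ((Complex.abs_re_le_norm _).trans hu.le)
      simp at h1
      constructor <;> linarith [h1.1, h1.2]
    have h1 := norm_deriv_logDeriv_le (g := Gamma) (c := n) (R := n / 2)
      (M := 2 * (4 * n) ^ (3 / 2 : ℝ)) (z := w + n) (by positivity) (by positivity)
      (fun u hu => (differentiableAt_Gamma_of_re_pos
        (by linarith [(hre u hu).1])).differentiableWithinAt)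
      (fun u hu => Complex.Gamma_ne_zero_of_re_pos (by linarith [(hre u hu).1]))
      (fun u hu => by
        have h2 := hre u hu
        have h3 : 1 ≤ ‖Gamma (n : ℂ)‖ := by
          obtain ⟨m, rfl⟩ : ∃ m, n = m + 1 := ⟨n - 1, by
            have : 0 < n := by exact_mod_cast hn0
            omega⟩
          push_cast
          rw [Complex.Gamma_nat_eq_factorial, Complex.norm_natCast]
          exact_mod_cast Nat.one_le_iff_ne_zero.2 (Nat.factorial_ne_zero m)
        refine (norm_Gamma_le (by linarith)).trans ((Gamma_le_of_one_le h2.1).trans ?_)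
        refine le_trans ?_ (le_mul_of_one_le_right (Real.exp_pos _).le h3)
        gcongr
        · linarith
        · exact h2.2)
      (by simp; linarith)
    refine h1.trans_eq ?_
    rw [Real.mul_rpow (by norm_num) hn0.le]
    have : (n : ℝ) ^ (3 / 2 : ℝ) = (n : ℝ) ^ (-(1 / 2) : ℝ) * (n : ℝ) ^ 2 := by
      rw [← Real.rpow_natCast, ← Real.rpow_add hn0]; norm_num
    rw [this]
    field_simp
    ring
  refine squeeze_zero_norm' key ?_
  have h0 : Tendsto (fun n : ℕ => (n : ℝ) ^ (-(1 / 2) : ℝ)) atTop (𝓝 0) :=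
    (tendsto_rpow_neg_atTop (by norm_num : (0 : ℝ) < 1 / 2)).comp tendsto_natCast_atTop_atTop
  simpa using h0.const_mul (64 * (2 * 4 ^ (3 / 2 : ℝ)) * 4)

lemma summable_norm_add_nat_rpow {w : ℂ} (hw : 0 < w.re) {σ : ℝ} (hσ : 1 < σ) :
    Summable fun n : ℕ => ‖w + n‖ ^ (-σ) := by
  have h1 : Summable fun n : ℕ => ((n : ℝ)) ^ (-σ) :=
    Real.summable_nat_rpow.2 (by linarith)
  rw [← summable_nat_add_iff 1] at h1 ⊢
  refine Summable.of_nonneg_of_le (fun n => by positivity) (fun n => ?_) h1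
  refine Real.rpow_le_rpow_of_nonpos (by positivity) ?_ (by linarith)
  have := Complex.re_le_norm (w + (n + 1 : ℕ))
  simp at this ⊢
  linarith

/-- The trigamma series `∑ (w + n)⁻²`: iterating the functional equation gives its partial sums,
with the trigamma function at `w + N` as remainder. -/
lemma hasSum_trigamma {w : ℂ} (hw : 0 < w.re) :
    HasSum (fun n : ℕ => ((w + n) ^ 2)⁻¹) (deriv (logDeriv Gamma) w) := by
  have hs : Summable (fun n : ℕ => ((w + n) ^ 2)⁻¹) := by
    refine Summable.of_norm ((summable_norm_add_nat_rpow hw one_lt_two).congr fun n => ?_)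
    rw [Real.rpow_neg (norm_nonneg _)]
    simp
  have hpart : ∀ N : ℕ, ∑ n ∈ Finset.range N, ((w + n) ^ 2)⁻¹ =
      deriv (logDeriv Gamma) w - deriv (logDeriv Gamma) (w + N) := by
    intro N
    induction N with
    | zero => simp
    | succ N ih =>
      rw [Finset.sum_range_succ, ih, deriv_logDeriv_Gamma_add_one (w := w + N) (by
        simp; positivity)]
      push_cast
      rw [add_assoc w]
      ring
  have h1 := hs.hasSum.tendsto_sum_nat
  have h2 : Tendsto (fun N : ℕ => ∑ n ∈ Finset.range N, ((w + n) ^ 2)⁻¹) atTop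
      (𝓝 (deriv (logDeriv Gamma) w)) := by
    simp_rw [hpart]
    simpa using (tendsto_deriv_logDeriv_Gamma w).const_sub (deriv (logDeriv Gamma) w)
  rw [← tendsto_nhds_unique h1 h2]
  exact hs.hasSum

/-! ### The formula at the exponent two -/

lemma logDeriv_Gammaℝ {z : ℂ} (hz : 0 < z.re) :
    logDeriv Gammaℝ z = -Complex.log Real.pi / 2 + logDeriv Gamma (z / 2) / 2 := by
  have hz2 : 0 < (z / 2).re := by simp; linarith
  have hpi : (Real.pi : ℂ) ≠ 0 := by exact_mod_cast Real.pi_ne_zero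
  have h1 : HasDerivAt (fun z : ℂ => (Real.pi : ℂ) ^ (-z / 2))
      ((Real.pi : ℂ) ^ (-z / 2) * Complex.log Real.pi * (-1 / 2)) z :=
    ((hasDerivAt_id z).neg.div_const 2).const_cpow (Or.inl hpi)
  have h2 : HasDerivAt (fun z : ℂ => Gamma (z / 2)) (deriv Gamma (z / 2) * (1 / 2)) z :=
    HasDerivAt.comp z (differentiableAt_Gamma_of_re_pos hz2).hasDerivAt
      ((hasDerivAt_id z).div_const 2)
  have h3 : Gammaℝ = fun z => (Real.pi : ℂ) ^ (-z / 2) * Gamma (z / 2) := rfl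
  have h4 : (Real.pi : ℂ) ^ (-z / 2) ≠ 0 := by simp [Complex.cpow_eq_zero_iff, hpi]
  have h5 := Complex.Gamma_ne_zero_of_re_pos hz2
  rw [logDeriv_apply, logDeriv_apply, h3, (h1.fun_mul h2).deriv]
  field_simp

lemma hasSum_nat_sq {z : ℂ} (hz : 0 < z.re) :
    HasSum (fun n : ℕ => ((z + 2 * n) ^ 2)⁻¹) (deriv (logDeriv Gamma) (z / 2) / 4) := by
  refine ((hasSum_trigamma (w := z / 2) (by simp; linarith)).div_const 4).congr_fun ?_
  intro n
  have : z / 2 + n = (z + 2 * n) / 2 := by ring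
  rw [this, div_pow, inv_div]
  ring

lemma abscissa_vonMangoldt_lt {z : ℂ} (hz : 1 < z.re) :
    LSeries.abscissaOfAbsConv (fun n => (ArithmeticFunction.vonMangoldt n : ℂ)) < z.re := by
  refine lt_of_le_of_lt (LSeries.abscissaOfAbsConv_le_of_forall_lt_LSeriesSummable (x := 1)
    fun y hy => ArithmeticFunction.LSeriesSummable_vonMangoldt (by simpa using hy)) ?_
  exact_mod_cast hz

/-- The Dirichlet series of the second logarithmic derivative of `ζ`. -/
lemma hasSum_vonMangoldt {z : ℂ} (hz : 1 < z.re) :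
    HasSum (fun n : ℕ => (ArithmeticFunction.vonMangoldt n : ℂ) * (n : ℂ) ^ (-z) * Real.log n)
      (LSeries (LSeries.logMul fun n => (ArithmeticFunction.vonMangoldt n : ℂ)) z) := by
  have h := (LSeriesSummable_logMul_of_lt_re (abscissa_vonMangoldt_lt hz)).hasSum
  refine h.congr_fun fun n => ?_
  rcases eq_or_ne n 0 with rfl | hn
  · simp
  · rw [LSeries.term_of_ne_zero hn, LSeries.logMul, Complex.cpow_neg, Complex.natCast_log]
    ring

/-- The right-hand side of the formula at `s = 2`, obtained by differentiating logarithmically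
`xi z = z (z - 1) Γ_ℝ(z) ζ(z)` twice. -/
theorem deriv_logDeriv_xi {z : ℂ} (hz : 1 < z.re) :
    -deriv (logDeriv xi) z = (z ^ 2)⁻¹ + ((z - 1) ^ 2)⁻¹ - deriv (logDeriv Gamma) (z / 2) / 4 -
      LSeries (LSeries.logMul fun n => (ArithmeticFunction.vonMangoldt n : ℂ)) z := by
  have hopen : IsOpen {z : ℂ | 1 < z.re} := isOpen_lt continuous_const Complex.continuous_re
  have hev : logDeriv xi =ᶠ[𝓝 z] fun w => w⁻¹ + (w - 1)⁻¹ +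
      (-Complex.log Real.pi / 2 + logDeriv Gamma (w / 2) / 2) +
      -LSeries (fun n => (ArithmeticFunction.vonMangoldt n : ℂ)) w := by
    filter_upwards [hopen.mem_nhds hz] with w hw
    have hw : 1 < w.re := hw
    have hw0 : w ≠ 0 := by rintro rfl; norm_num at hw
    have hw1 : w ≠ 1 := by rintro rfl; norm_num at hw
    have hw1' := sub_ne_zero.2 hw1
    have hG := Gammaℝ_ne_zero_of_re_pos (s := w) (by linarith)
    have hdG := differentiableAt_Gammaℝ (z := w) (by linarith)
    have hζ := riemannZeta_ne_zero_of_one_le_re hw.le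
    have hdζ := differentiableAt_riemannZeta hw1
    have hxi : xi =ᶠ[𝓝 w] fun w => w * (w - 1) * Gammaℝ w * riemannZeta w := by
      filter_upwards [hopen.mem_nhds hw] with u hu
      have hu : 1 < u.re := hu
      exact xi_eq_zeta (by linarith) (by rintro rfl; norm_num at hu)
    have h1 : logDeriv xi w = logDeriv (fun w => w * (w - 1) * Gammaℝ w * riemannZeta w) w := by
      rw [logDeriv_apply, logDeriv_apply, hxi.deriv_eq, hxi.eq_of_nhds]
    rw [h1, ArithmeticFunction.LSeries_vonMangoldt_eq_deriv_riemannZeta_div hw,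
      logDeriv_mul (f := fun w => w * (w - 1) * Gammaℝ w) w
        (mul_ne_zero (mul_ne_zero hw0 hw1') hG) hζ (by fun_prop) hdζ,
      logDeriv_mul (f := fun w => w * (w - 1)) w
        (mul_ne_zero hw0 hw1') hG (by fun_prop) hdG,
      logDeriv_mul (f := fun w => w) w hw0 hw1' (by fun_prop) (by fun_prop),
      logDeriv_Gammaℝ (by linarith)]
    simp [logDeriv_apply, neg_div]
  rw [hev.deriv_eq]
  have hz0 : z ≠ 0 := by rintro rfl; norm_num at hz
  have hz1 : z - 1 ≠ 0 := sub_ne_zero.2 (by rintro rfl; norm_num at hz)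
  have d1 : HasDerivAt (fun w : ℂ => w⁻¹) (-(z ^ 2)⁻¹) z := hasDerivAt_inv hz0
  have d2 : HasDerivAt (fun w : ℂ => (w - 1)⁻¹) (-((z - 1) ^ 2)⁻¹) z :=
    (hasDerivAt_inv hz1).comp_sub_const z 1
  have d3 : HasDerivAt (fun w : ℂ => logDeriv Gamma (w / 2))
      (deriv (logDeriv Gamma) (z / 2) * (1 / 2)) z :=
    HasDerivAt.comp z (differentiableAt_logDeriv_Gamma (by simp; linarith)).hasDerivAt
      ((hasDerivAt_id z).div_const 2)
  have d4 := LSeries_hasDerivAt (abscissa_vonMangoldt_lt hz)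
  have hd := ((d1.fun_add d2).fun_add ((d3.div_const 2).const_add (-Complex.log Real.pi / 2))).fun_add
    d4.fun_neg
  rw [hd.deriv]
  ring

/-! ### Mellin transforms of the kernels -/

open MeasureTheory in
lemma integrableOn_rpow_mul_exp {a r : ℝ} (ha : -1 < a) (hr : 0 < r) :
    IntegrableOn (fun t : ℝ => t ^ a * Real.exp (-(r * t))) (Set.Ioi 0) := by
  simpa [neg_mul] using integrableOn_rpow_mul_exp_neg_mul_rpow (p := 1) ha one_pos hr

lemma norm_ofReal_mul_exp {b t : ℝ} (hb : 0 ≤ b) (r : ℂ) :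
    ‖(b : ℂ) * Complex.exp (-(r * t))‖ = b * Real.exp (-(r.re * t)) := by
  rw [norm_mul, Complex.norm_exp, Complex.norm_real, Real.norm_of_nonneg hb]
  simp

open MeasureTheory in
lemma integrableOn_rpow_mul_cexp {a : ℝ} {r : ℂ} (ha : -1 < a) (hr : 0 < r.re) :
    IntegrableOn (fun t : ℝ => ((t ^ a : ℝ) : ℂ) * Complex.exp (-(r * t))) (Set.Ioi 0) := by
  refine (integrableOn_rpow_mul_exp ha hr).mono' ?_ ?_
  · exact (by fun_prop : Measurable fun t : ℝ => ((t ^ a : ℝ) : ℂ) * Complex.exp (-(r * t))).aestronglyMeasurable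
  · filter_upwards [ae_restrict_mem measurableSet_Ioi] with t ht
    exact (norm_ofReal_mul_exp (Real.rpow_nonneg (le_of_lt ht) _) r).le

/-- A property holding on a real neighbourhood holds often enough in `ℂ` for the identity
theorem. -/
lemma frequently_of_eventually_ofReal {P : ℂ → Prop} {x₀ : ℝ} (h : ∀ᶠ x : ℝ in 𝓝 x₀, P x) :
    ∃ᶠ z in 𝓝[≠] (x₀ : ℂ), P z := by
  have ht : Tendsto (fun x : ℝ => (x : ℂ)) (𝓝[≠] x₀) (𝓝[≠] (x₀ : ℂ)) :=
    Complex.continuous_ofReal.continuousWithinAt.tendsto_nhdsWithin fun x hx h =>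
      hx (Complex.ofReal_injective h)
  exact ht.frequently (h.filter_mono nhdsWithin_le_nhds).frequently

open MeasureTheory in
/-- Euler's integral `∫ t^(a-1) e^{-rt} dt = Γ(a) r^{-a}` for complex `r` in the right half-plane;
it extends from real `r` by the identity theorem. -/
lemma integral_rpow_mul_cexp {a : ℝ} {r : ℂ} (ha : 0 < a) (hr : 0 < r.re) :
    ∫ t : ℝ in Set.Ioi 0, ((t ^ (a - 1) : ℝ) : ℂ) * Complex.exp (-(r * t)) =
      r ^ (-(a : ℂ)) * Real.Gamma a := by
  have hopen : IsOpen {z : ℂ | 0 < z.re} := isOpen_lt continuous_const Complex.continuous_re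
  have hd : DifferentiableOn ℂ (fun r : ℂ =>
      ∫ t : ℝ in Set.Ioi 0, ((t ^ (a - 1) : ℝ) : ℂ) * Complex.exp (-(r * t))) {z | 0 < z.re} := by
    intro r hr
    have hr : 0 < r.re := hr
    have hnhds : {z : ℂ | r.re / 2 < z.re} ∈ 𝓝 r :=
      (isOpen_lt continuous_const Complex.continuous_re).mem_nhds (by simp; linarith)
    have := hasDerivAt_integral_of_dominated_loc_of_deriv_le (μ := volume.restrict (Set.Ioi (0:ℝ)))
      (F := fun (r : ℂ) (t : ℝ) => ((t ^ (a - 1) : ℝ) : ℂ) * Complex.exp (-(r * t)))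
      (F' := fun (r : ℂ) (t : ℝ) => ((t ^ (a - 1) : ℝ) : ℂ) * (Complex.exp (-(r * t)) * (-t)))
      (x₀ := r) (bound := fun t => t ^ a * Real.exp (-(r.re / 2 * t))) hnhds
      (Eventually.of_forall fun r => (by fun_prop : Measurable fun t : ℝ =>
        ((t ^ (a - 1) : ℝ) : ℂ) * Complex.exp (-(r * t))).aestronglyMeasurable)
      (integrableOn_rpow_mul_cexp (by linarith) hr)
      (by fun_prop : Measurable fun t : ℝ =>
        ((t ^ (a - 1) : ℝ) : ℂ) * (Complex.exp (-(r * t)) * (-t))).aestronglyMeasurable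
      (by
        filter_upwards [ae_restrict_mem measurableSet_Ioi] with t ht u hu
        have ht : 0 < t := ht
        have hu : r.re / 2 < u.re := hu
        rw [← mul_assoc, norm_mul, norm_ofReal_mul_exp (Real.rpow_nonneg ht.le _), norm_neg,
          Complex.norm_real, Real.norm_of_nonneg ht.le, Real.rpow_sub_one ht.ne']
        rw [show t ^ a / t * Real.exp (-(u.re * t)) * t = t ^ a * Real.exp (-(u.re * t)) by
          field_simp]
        gcongr)
      (integrableOn_rpow_mul_exp (by linarith) (by linarith))
      (by
        refine Eventually.of_forall fun t u _ => ?_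
        have h1 : HasDerivAt (fun u : ℂ => -(u * t)) (-(t : ℂ)) u := by
          simpa using ((hasDerivAt_id u).mul_const (t : ℂ)).fun_neg
        exact h1.cexp.const_mul _)
    exact this.2.differentiableAt.differentiableWithinAt
  have hd2 : DifferentiableOn ℂ (fun r : ℂ => r ^ (-(a : ℂ)) * Real.Gamma a) {z | 0 < z.re} := by
    intro r hr
    have : r ∈ slitPlane := Or.inl hr
    exact ((differentiableAt_id.cpow_const this).mul_const _).differentiableWithinAt
  have hconv : IsPreconnected {z : ℂ | 0 < z.re} := (convex_halfSpace_re_gt 0).isPreconnected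
  refine AnalyticOnNhd.eqOn_of_preconnected_of_frequently_eq (hd.analyticOnNhd hopen)
    (hd2.analyticOnNhd hopen) hconv (z₀ := 1) (by simp) ?_ hr
  have hreal : ∀ x : ℝ, 0 < x → ∫ t : ℝ in Set.Ioi 0, ((t ^ (a - 1) : ℝ) : ℂ) * Complex.exp (-(x * t))
      = (x : ℂ) ^ (-(a : ℂ)) * Real.Gamma a := by
    intro x hx
    have h := Real.integral_rpow_mul_exp_neg_mul_Ioi ha hx
    have h2 : ∀ t : ℝ, ((t ^ (a - 1) : ℝ) : ℂ) * Complex.exp (-(x * t)) =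
        ((t ^ (a - 1) * Real.exp (-(x * t)) : ℝ) : ℂ) := by intro t; push_cast; rfl
    simp_rw [h2]
    rw [integral_complex_ofReal, h, one_div, Real.inv_rpow hx.le, ← Real.rpow_neg hx.le]
    push_cast [Complex.ofReal_cpow hx.le]
    rfl
  have := frequently_of_eventually_ofReal (x₀ := 1) (P := fun r : ℂ =>
    ∫ t : ℝ in Set.Ioi 0, ((t ^ (a - 1) : ℝ) : ℂ) * Complex.exp (-(r * t)) =
      r ^ (-(a : ℂ)) * Real.Gamma a) ((eventually_gt_nhds one_pos).mono hreal)
  simpa only [Complex.ofReal_one] using this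

open MeasureTheory in
/-- Absolute integrability of `x^(1-σ) t e^{-(w+x)t}` on the quadrant; `σ < 2` is needed at
`x = 0`, and `σ > 0` at `t = 0`. -/
lemma integrable_kernel {w : ℂ} {σ : ℝ} (hw : 0 < w.re) (h1 : 1 < σ) (h2 : σ < 2) :
    Integrable (Function.uncurry fun x t : ℝ => ((x ^ (1 - σ) : ℝ) : ℂ) *
      (((t ^ ((2 : ℝ) - 1) : ℝ) : ℂ) * Complex.exp (-((w + x) * t))))
      ((volume.restrict (Set.Ioi 0)).prod (volume.restrict (Set.Ioi 0))) := by
  have hn : ∀ x t : ℝ, 0 < x → 0 < t → ‖((x ^ (1 - σ) : ℝ) : ℂ) *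
      (((t ^ ((2 : ℝ) - 1) : ℝ) : ℂ) * Complex.exp (-((w + x) * t)))‖ =
      (t * Real.exp (-(w.re * t))) * (x ^ (1 - σ) * Real.exp (-(t * x))) := by
    intro x t hx ht
    rw [norm_mul, norm_ofReal_mul_exp (Real.rpow_nonneg ht.le _), Complex.norm_real,
      Real.norm_of_nonneg (Real.rpow_nonneg hx.le _), show (2 : ℝ) - 1 = 1 by norm_num,
      Real.rpow_one, show -((w + x).re * t) = -(w.re * t) + -(t * x) by simp; ring, Real.exp_add]
    ring
  have hm : Measurable (Function.uncurry fun x t : ℝ => ((x ^ (1 - σ) : ℝ) : ℂ) *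
      (((t ^ ((2 : ℝ) - 1) : ℝ) : ℂ) * Complex.exp (-((w + x) * t)))) := by
    unfold Function.uncurry
    fun_prop
  rw [integrable_prod_iff' hm.aestronglyMeasurable]
  constructor
  · filter_upwards [ae_restrict_mem measurableSet_Ioi] with t ht
    have ht : 0 < t := ht
    refine Integrable.mono' ((integrableOn_rpow_mul_exp (a := 1 - σ) (by linarith) ht).const_mul
      (t * Real.exp (-(w.re * t)))) (hm.comp (by fun_prop : Measurable fun x : ℝ => (x, t))).aestronglyMeasurable ?_
    filter_upwards [ae_restrict_mem measurableSet_Ioi] with x hx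
    exact (hn x t hx ht).le
  · have h : IntegrableOn (fun t : ℝ => Real.Gamma (2 - σ) * (t ^ (σ - 1) * Real.exp (-(w.re * t))))
      (Set.Ioi 0) := (integrableOn_rpow_mul_exp (by linarith) hw).const_mul _
    refine h.congr_fun (fun t ht => ?_) measurableSet_Ioi
    have ht : 0 < t := ht
    have h3 := Real.integral_rpow_mul_exp_neg_mul_Ioi (a := 2 - σ) (by linarith) ht
    rw [show 2 - σ - 1 = 1 - σ by ring] at h3
    have h4 : ∫ x : ℝ in Set.Ioi 0, ‖Function.uncurry (fun x t : ℝ => ((x ^ (1 - σ) : ℝ) : ℂ) *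
      (((t ^ ((2 : ℝ) - 1) : ℝ) : ℂ) * Complex.exp (-((w + x) * t)))) (x, t)‖ =
        ∫ x : ℝ in Set.Ioi 0, (t * Real.exp (-(w.re * t))) * (x ^ (1 - σ) * Real.exp (-(t * x))) :=
      setIntegral_congr_fun measurableSet_Ioi fun x hx => hn x t hx ht
    beta_reduce
    rw [h4, integral_const_mul, h3, one_div, Real.inv_rpow ht.le, ← Real.rpow_neg ht.le,
      show σ - 1 = 1 + -(2 - σ) by ring, Real.rpow_add ht, Real.rpow_one]
    ring

lemma rpow_mul_inner_integral {w : ℂ} (hw : 0 < w.re) {x : ℝ} (hx : 0 < x) :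
    ∫ t : ℝ in Set.Ioi 0, ((t ^ ((2 : ℝ) - 1) : ℝ) : ℂ) * Complex.exp (-((w + x) * t)) =
      ((w + x) ^ 2)⁻¹ := by
  rw [integral_rpow_mul_cexp two_pos (by simp; linarith), Real.Gamma_two, Complex.cpow_neg]
  norm_cast
  simp

open MeasureTheory in
/-- The Mellin transform `∫ x^(1-σ) (w+x)⁻² dx = Γ(2-σ) Γ(σ) w^{-σ}`, from Fubini applied to
`x^(1-σ) t e^{-(w+x)t}`. -/
lemma integral_kernel {w : ℂ} {σ : ℝ} (hw : 0 < w.re) (h1 : 1 < σ) (h2 : σ < 2) :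
    IntegrableOn (fun x : ℝ => ((x ^ (1 - σ) : ℝ) : ℂ) * ((w + x) ^ 2)⁻¹) (Set.Ioi 0) ∧
    ∫ x : ℝ in Set.Ioi 0, ((x ^ (1 - σ) : ℝ) : ℂ) * ((w + x) ^ 2)⁻¹ =
      ((Real.Gamma (2 - σ) * Real.Gamma σ : ℝ) : ℂ) * w ^ (-(σ : ℂ)) := by
  have hI := integrable_kernel hw h1 h2
  have hinner : ∀ x ∈ Set.Ioi (0 : ℝ), ∫ t : ℝ in Set.Ioi 0, ((x ^ (1 - σ) : ℝ) : ℂ) *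
      (((t ^ ((2 : ℝ) - 1) : ℝ) : ℂ) * Complex.exp (-((w + x) * t))) =
      ((x ^ (1 - σ) : ℝ) : ℂ) * ((w + x) ^ 2)⁻¹ := by
    intro x hx
    rw [integral_const_mul, rpow_mul_inner_integral hw hx]
  constructor
  · exact IntegrableOn.congr_fun hI.integral_prod_left hinner measurableSet_Ioi
  · rw [← setIntegral_congr_fun measurableSet_Ioi hinner, integral_integral_swap hI]
    have hout : ∀ t ∈ Set.Ioi (0 : ℝ), ∫ x : ℝ in Set.Ioi 0, ((x ^ (1 - σ) : ℝ) : ℂ) *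
        (((t ^ ((2 : ℝ) - 1) : ℝ) : ℂ) * Complex.exp (-((w + x) * t))) =
        ((Real.Gamma (2 - σ) : ℝ) : ℂ) * (((t ^ (σ - 1) : ℝ) : ℂ) * Complex.exp (-(w * t))) := by
      intro t ht
      have ht : 0 < t := ht
      have h3 := integral_rpow_mul_cexp (a := 2 - σ) (r := t) (by linarith) (by simpa using ht)
      rw [show 2 - σ - 1 = 1 - σ by ring] at h3
      have h4 : ∀ x : ℝ, ((x ^ (1 - σ) : ℝ) : ℂ) *
        (((t ^ ((2 : ℝ) - 1) : ℝ) : ℂ) * Complex.exp (-((w + x) * t))) =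
        ((t : ℂ) * Complex.exp (-(w * t))) * (((x ^ (1 - σ) : ℝ) : ℂ) * Complex.exp (-(t * x))) := by
        intro x
        rw [show (2 : ℝ) - 1 = 1 by norm_num, Real.rpow_one,
          show -((w + x) * t) = -(w * t) + -(t * x) by ring, Complex.exp_add]
        ring
      simp_rw [h4]
      rw [integral_const_mul, h3, show σ - 1 = 1 + -(2 - σ) by ring, Real.rpow_add ht, Real.rpow_one,
        Complex.ofReal_mul, Complex.ofReal_cpow ht.le, Complex.ofReal_neg]
      ring
    rw [setIntegral_congr_fun measurableSet_Ioi hout, integral_const_mul,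
      integral_rpow_mul_cexp (by linarith) hw]
    push_cast
    ring

open MeasureTheory in
/-- The `L¹` norm of the kernel is comparable to its integral: `(|w| + x)² ≤ 2 |w + x|²` when
`Re w > 0`, which reduces to the kernel of the real number `|w|`. -/
lemma integral_norm_kernel_le {w : ℂ} {σ : ℝ} (hw : 0 < w.re) (h1 : 1 < σ) (h2 : σ < 2) :
    ∫ x : ℝ in Set.Ioi 0, ‖((x ^ (1 - σ) : ℝ) : ℂ) * ((w + x) ^ 2)⁻¹‖ ≤
      2 * (Real.Gamma (2 - σ) * Real.Gamma σ) * ‖w‖ ^ (-σ) := by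
  have hw0 : 0 < ‖w‖ := norm_pos_iff.2 (by rintro rfl; simp at hw)
  obtain ⟨hi, he⟩ := integral_kernel (w := (‖w‖ : ℂ)) (by simpa using hw0) h1 h2
  have hcast : ∀ x : ℝ, ((x ^ (1 - σ) : ℝ) : ℂ) * (((‖w‖ : ℂ) + x) ^ 2)⁻¹ =
      ((x ^ (1 - σ) * ((‖w‖ + x) ^ 2)⁻¹ : ℝ) : ℂ) := by intro x; push_cast; rfl
  simp_rw [hcast] at hi he
  have hi' : IntegrableOn (fun x : ℝ => x ^ (1 - σ) * ((‖w‖ + x) ^ 2)⁻¹) (Set.Ioi 0) := by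
    exact Integrable.re hi
  have he' : ∫ x : ℝ in Set.Ioi 0, x ^ (1 - σ) * ((‖w‖ + x) ^ 2)⁻¹ =
      Real.Gamma (2 - σ) * Real.Gamma σ * ‖w‖ ^ (-σ) := by
    rw [integral_complex_ofReal, ← Complex.ofReal_neg, ← Complex.ofReal_cpow hw0.le] at he
    exact_mod_cast he
  calc _ ≤ ∫ x : ℝ in Set.Ioi 0, 2 * (x ^ (1 - σ) * ((‖w‖ + x) ^ 2)⁻¹) := by
        refine setIntegral_mono_on (integral_kernel hw h1 h2).1.norm (hi'.const_mul 2)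
          measurableSet_Ioi fun x hx => ?_
        have hx : 0 < x := hx
        have hsq : (‖w‖ + x) ^ 2 ≤ 2 * ‖w + x‖ ^ 2 := by
          have e1 := Complex.sq_norm w
          have e2 := Complex.sq_norm (w + x)
          simp only [Complex.normSq_apply, Complex.add_re, Complex.add_im, Complex.ofReal_re,
            Complex.ofReal_im, add_zero] at e1 e2
          nlinarith [sq_nonneg (‖w‖ - x), mul_pos hw hx]
        rw [norm_mul, Complex.norm_real, Real.norm_of_nonneg (Real.rpow_nonneg hx.le _), norm_inv,
          norm_pow, mul_left_comm]
        have : (‖w + x‖ ^ 2)⁻¹ ≤ 2 * ((‖w‖ + x) ^ 2)⁻¹ := by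
          have p1 : 0 < (‖w‖ + x) ^ 2 := by positivity
          have p2 : 0 < ‖w + x‖ ^ 2 := by linarith
          rw [← div_eq_mul_inv, inv_eq_one_div, div_le_div_iff₀ p2 p1]
          linarith
        gcongr
    _ = _ := by rw [integral_const_mul, he']; ring

/-! ### The arithmetic terms and holomorphy in the exponent -/

/-- Logarithmic powers do not affect convergence: `log n ≤ n^ε / ε`, with `ε` such that the
power of the logarithm costs half of the margin `y - 1`. -/
lemma summable_vonMangoldt_mul_log_rpow {y p : ℝ} (hy : 1 < y) (hp : 0 < p) :
    Summable fun n : ℕ => ArithmeticFunction.vonMangoldt n * (n : ℝ) ^ (-y) * Real.log n ^ p := by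
  set ε := (y - 1) / 2 / p with hε
  have hε0 : 0 < ε := by have := sub_pos.2 hy; positivity
  have hs : Summable fun n : ℕ => ArithmeticFunction.vonMangoldt n * (n : ℝ) ^ (-((y + 1) / 2)) := by
    have h := (ArithmeticFunction.LSeriesSummable_vonMangoldt
      (s := (((y + 1) / 2 : ℝ) : ℂ)) (by rw [Complex.ofReal_re]; linarith)).norm
    refine h.congr fun n => ?_
    rw [LSeries.norm_term_eq]
    split_ifs with hn
    · simp [hn]
    · rw [Complex.norm_real, Real.norm_of_nonneg ArithmeticFunction.vonMangoldt_nonneg,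
        Complex.ofReal_re, Real.rpow_neg (Nat.cast_nonneg n), div_eq_mul_inv]
  refine Summable.of_nonneg_of_le (fun n => ?_) (fun n => ?_) (hs.mul_right ((1 / ε) ^ p))
  · have := ArithmeticFunction.vonMangoldt_nonneg (n := n)
    have := Real.log_natCast_nonneg n
    positivity
  · have h0 := ArithmeticFunction.vonMangoldt_nonneg (n := n)
    have h1 := Real.log_natCast_nonneg n
    rcases Nat.eq_zero_or_pos n with rfl | hn
    · simp
    have hn' : (0 : ℝ) < n := by exact_mod_cast hn
    have h2 : Real.log n ^ p ≤ (n : ℝ) ^ ((y - 1) / 2) * (1 / ε) ^ p := by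
      calc _ ≤ ((n : ℝ) ^ ε * (1 / ε)) ^ p := by
            refine Real.rpow_le_rpow h1 ?_ hp.le
            rw [mul_one_div]
            exact Real.log_le_rpow_div hn'.le hε0
        _ = _ := by
            rw [Real.mul_rpow (by positivity) (by positivity), ← Real.rpow_mul hn'.le, hε,
              div_mul_cancel₀ _ hp.ne']
    calc _ ≤ ArithmeticFunction.vonMangoldt n * (n : ℝ) ^ (-y) *
          ((n : ℝ) ^ ((y - 1) / 2) * (1 / ε) ^ p) := by gcongr
      _ = _ := by
          rw [show -((y + 1) / 2) = -y + (y - 1) / 2 by ring, Real.rpow_add hn']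
          ring

/-- The term `Λ(n) n^{-z} (log n)^{s-1}` of the arithmetic side, indexed by all naturals. -/
noncomputable def primeTerm (z s : ℂ) (n : ℕ) : ℂ :=
  (ArithmeticFunction.vonMangoldt n : ℂ) * (n : ℂ) ^ (-z) * (Real.log n : ℂ) ^ (s - 1)

open MeasureTheory in
/-- The integral `∫ x^(1-σ) n^{-x} dx = Γ(2-σ) (log n)^(σ-2)` turns the terms at `s = 2` into
those at `s = σ`, for both the terms and their absolute values. -/
lemma integral_prime_kernel {z : ℂ} {σ : ℝ} (hσ : σ < 2) (n : ℕ) :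
    (IntegrableOn (fun x : ℝ => ((x ^ (1 - σ) : ℝ) : ℂ) *
      ((ArithmeticFunction.vonMangoldt n : ℂ) * (n : ℂ) ^ (-(z + x)) * Real.log n)) (Set.Ioi 0)) ∧
    (∫ x : ℝ in Set.Ioi 0, ((x ^ (1 - σ) : ℝ) : ℂ) *
      ((ArithmeticFunction.vonMangoldt n : ℂ) * (n : ℂ) ^ (-(z + x)) * Real.log n) =
      Real.Gamma (2 - σ) * primeTerm z σ n) ∧
    ∫ x : ℝ in Set.Ioi 0, ‖((x ^ (1 - σ) : ℝ) : ℂ) *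
      ((ArithmeticFunction.vonMangoldt n : ℂ) * (n : ℂ) ^ (-(z + x)) * Real.log n)‖ =
      Real.Gamma (2 - σ) *
        (ArithmeticFunction.vonMangoldt n * (n : ℝ) ^ (-z.re) * Real.log n ^ (σ - 1)) := by
  by_cases hn : n ≤ 1
  · have : ArithmeticFunction.vonMangoldt n = 0 := by interval_cases n <;> simp
    simp [this, primeTerm]
  push Not at hn
  have hn0 : 0 < n := by omega
  have hnR : (0 : ℝ) < n := by exact_mod_cast hn0
  have hnC : (n : ℂ) ≠ 0 := by exact_mod_cast hn0.ne'
  have hlog : 0 < Real.log n := Real.log_pos (by exact_mod_cast hn)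
  have hpow : Real.log n * (Real.log n) ^ (-(2 - σ)) = Real.log n ^ (σ - 1) := by
    rw [show σ - 1 = 1 + -(2 - σ) by ring, Real.rpow_add hlog, Real.rpow_one]
  have heq : ∀ x : ℝ, ((x ^ (1 - σ) : ℝ) : ℂ) *
      ((ArithmeticFunction.vonMangoldt n : ℂ) * (n : ℂ) ^ (-(z + x)) * Real.log n) =
      ((ArithmeticFunction.vonMangoldt n : ℂ) * (n : ℂ) ^ (-z) * Real.log n) *
      (((x ^ ((2 - σ) - 1) : ℝ) : ℂ) * Complex.exp (-((Real.log n : ℂ) * x))) := by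
    intro x
    rw [neg_add, Complex.cpow_add _ _ hnC, Complex.cpow_def_of_ne_zero hnC (-(x : ℂ)),
      Complex.natCast_log, show 2 - σ - 1 = 1 - σ by ring,
      show -(Complex.log n * (x : ℂ)) = Complex.log n * -x by ring]
    ring
  have hI := integrableOn_rpow_mul_cexp (a := (2 - σ) - 1) (r := (Real.log n : ℂ)) (by linarith)
    (by rwa [Complex.ofReal_re])
  have hnorm : ∀ x ∈ Set.Ioi (0 : ℝ), ‖((x ^ (1 - σ) : ℝ) : ℂ) *
      ((ArithmeticFunction.vonMangoldt n : ℂ) * (n : ℂ) ^ (-(z + x)) * Real.log n)‖ =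
      (ArithmeticFunction.vonMangoldt n * (n : ℝ) ^ (-z.re) * Real.log n) *
      (x ^ ((2 - σ) - 1) * Real.exp (-(Real.log n * x))) := by
    intro x hx
    rw [heq, norm_mul, norm_ofReal_mul_exp (Real.rpow_nonneg (le_of_lt hx) _), norm_mul, norm_mul,
      Complex.norm_real, Complex.norm_real, Real.norm_of_nonneg hlog.le,
      Real.norm_of_nonneg ArithmeticFunction.vonMangoldt_nonneg,
      Complex.norm_natCast_cpow_of_pos hn0, Complex.neg_re, Complex.ofReal_re]
  refine ⟨?_, ?_, ?_⟩
  · simp_rw [heq]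
    exact hI.const_mul _
  · simp_rw [heq]
    rw [integral_const_mul, integral_rpow_mul_cexp (by linarith) (by rwa [Complex.ofReal_re]), primeTerm,
      ← Complex.ofReal_neg, ← Complex.ofReal_cpow hlog.le, ← Complex.ofReal_one,
      ← Complex.ofReal_sub, ← Complex.ofReal_cpow hlog.le, ← hpow]
    push_cast
    ring
  · rw [setIntegral_congr_fun measurableSet_Ioi hnorm, integral_const_mul,
      Real.integral_rpow_mul_exp_neg_mul_Ioi (by linarith) hlog, one_div, Real.inv_rpow hlog.le,
      ← Real.rpow_neg hlog.le, ← hpow]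
    ring

/-- The modulus of a complex power, with the argument bounded by `π`. -/
lemma norm_cpow_neg_le {w : ℂ} (hw : w ≠ 0) (s : ℂ) :
    ‖w ^ (-s)‖ ≤ Real.exp (Real.pi * |s.im|) * ‖w‖ ^ (-s.re) := by
  rw [Complex.norm_cpow_of_ne_zero hw, div_eq_mul_inv, ← Real.exp_neg, mul_comm, Complex.neg_re]
  gcongr
  rw [Complex.neg_im, mul_neg, neg_neg]
  calc w.arg * s.im ≤ |w.arg * s.im| := le_abs_self _
    _ = |w.arg| * |s.im| := abs_mul _ _
    _ ≤ _ := by gcongr; exact Complex.abs_arg_le_pi w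

lemma summable_norm_cpow {ι : Type*} {c w : ι → ℂ} (hw : ∀ i, c i ≠ 0 → w i ≠ 0)
    (h : ∀ σ : ℝ, 1 < σ → Summable fun i => ‖c i‖ * ‖w i‖ ^ (-σ)) {s : ℂ} (hs : 1 < s.re) :
    Summable fun i => ‖c i * w i ^ (-s)‖ := by
  refine Summable.of_nonneg_of_le (fun i => norm_nonneg _) (fun i => ?_)
    ((h s.re hs).mul_left (Real.exp (Real.pi * |s.im|)))
  by_cases hc : c i = 0
  · simp [hc]
  rw [norm_mul, mul_left_comm]
  gcongr
  exact norm_cpow_neg_le (hw i hc) s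

/-- A generalized Dirichlet series that converges absolutely for `Re s > 1` is holomorphic there:
on a bounded piece `a < Re s < b` its terms are dominated by `|w|^{-a} + |w|^{-b}`, up to a
constant. -/
lemma differentiableOn_tsum_cpow {ι : Type*} {c w : ι → ℂ} (hw : ∀ i, c i ≠ 0 → w i ≠ 0)
    (h : ∀ σ : ℝ, 1 < σ → Summable fun i => ‖c i‖ * ‖w i‖ ^ (-σ)) :
    DifferentiableOn ℂ (fun s : ℂ => ∑' i, c i * w i ^ (-s)) {s | 1 < s.re} := by
  intro s hs
  have hs : 1 < s.re := hs
  set a := (1 + s.re) / 2 with ha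
  set b := s.re + 1 with hb
  set M := |s.im| + 1 with hM
  have hU : IsOpen {u : ℂ | a < u.re ∧ u.re < b ∧ |u.im| < M} :=
    (isOpen_lt continuous_const Complex.continuous_re).inter
      ((isOpen_lt Complex.continuous_re continuous_const).inter
        (isOpen_lt Complex.continuous_im.abs continuous_const))
  have hsU : s ∈ {u : ℂ | a < u.re ∧ u.re < b ∧ |u.im| < M} :=
    ⟨by rw [ha]; linarith, by rw [hb]; linarith, by rw [hM]; linarith⟩
  refine ((differentiableOn_tsum_of_summable_norm (u := fun i => Real.exp (Real.pi * M) *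
    (‖c i‖ * ‖w i‖ ^ (-a) + ‖c i‖ * ‖w i‖ ^ (-b)))
    (((h a (by rw [ha]; linarith)).add (h b (by rw [hb]; linarith))).mul_left _) (fun i => ?_) hU
    fun i u hu => ?_).differentiableAt (hU.mem_nhds hsU)).differentiableWithinAt
  · by_cases hc : c i = 0
    · simp [hc]
    · exact fun u _ => ((differentiableAt_id.neg.const_cpow (Or.inl (hw i hc))).const_mul
        _).differentiableWithinAt
  · by_cases hc : c i = 0
    · simp [hc]
    have hwi := hw i hc
    obtain ⟨h1, h2, h3⟩ := hu
    rw [norm_mul, ← mul_add, mul_left_comm]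
    gcongr
    refine (norm_cpow_neg_le hwi u).trans ?_
    have hp : 0 < ‖w i‖ := norm_pos_iff.2 hwi
    gcongr
    rcases le_total 1 ‖w i‖ with h4 | h4
    · have := Real.rpow_le_rpow_of_exponent_le h4 (neg_le_neg h1.le)
      have := Real.rpow_nonneg hp.le (-b)
      linarith
    · have := Real.rpow_le_rpow_of_exponent_ge hp h4 (neg_le_neg h2.le)
      have := Real.rpow_nonneg hp.le (-a)
      linarith

/-! ### Deformation of the exponent -/

/-- The kernel `x^(1-σ) (w+x)⁻²`, whose integral over `x > 0` is `Γ(2-σ) Γ(σ) w^{-σ}`. -/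
noncomputable def zeroKernel (σ : ℝ) (w : ℂ) (x : ℝ) : ℂ :=
  ((x ^ (1 - σ) : ℝ) : ℂ) * ((w + x) ^ 2)⁻¹

/-- The terms of the case `s = 2` of the formula at the point `z + x`, weighted by `x^(1-σ)`:
zeros, trivial zeros and prime powers. -/
noncomputable def kernelTerm (z : ℂ) (σ : ℝ) : NontrivialZeros ⊕ (ℕ ⊕ ℕ) → ℝ → ℂ
  | .inl ρ, x => (vanishingOrder riemannZeta ρ.1 : ℂ) * zeroKernel σ (z - ρ.1) x
  | .inr (.inl n), x => zeroKernel σ (z + 2 * n) x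
  | .inr (.inr n), x => ((x ^ (1 - σ) : ℝ) : ℂ) *
      ((ArithmeticFunction.vonMangoldt n : ℂ) * (n : ℂ) ^ (-(z + x)) * Real.log n)

/-- The case `s = 2` at `z + x`, weighted, with the sums over zeros, trivial zeros and prime
powers collected on one side so that a single termwise integration applies. -/
lemma hasSum_kernelTerm {z : ℂ} (hz : 1 < z.re) (σ : ℝ) {x : ℝ} (hx : 0 < x) :
    HasSum (fun i => kernelTerm z σ i x) (zeroKernel σ z x + zeroKernel σ (z - 1) x) := by
  have hzx : 1 < (z + x).re := by simp; linarith
  have h1 := (hasSum_zeros hzx).mul_left ((x ^ (1 - σ) : ℝ) : ℂ)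
  have h2 := (hasSum_nat_sq (z := z + x) (by linarith)).mul_left ((x ^ (1 - σ) : ℝ) : ℂ)
  have h3 := (hasSum_vonMangoldt hzx).mul_left ((x ^ (1 - σ) : ℝ) : ℂ)
  have h4 := deriv_logDeriv_xi hzx
  have h := HasSum.sum (f := fun i => kernelTerm z σ i x)
    (h1.congr_fun (g := (fun i => kernelTerm z σ i x) ∘ Sum.inl) fun ρ => ?_)
    (HasSum.sum (f := (fun i => kernelTerm z σ i x) ∘ Sum.inr)
      (h2.congr_fun (g := ((fun i => kernelTerm z σ i x) ∘ Sum.inr) ∘ Sum.inl) fun n => ?_) h3)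
  · convert h using 1
    rw [h4, zeroKernel, zeroKernel, show z + x - 1 = z - 1 + x by ring]
    ring
  · simp only [Function.comp, kernelTerm, zeroKernel]
    rw [show z - ρ.1 + x = z + x - ρ.1 by ring]
    ring
  · simp only [Function.comp, kernelTerm, zeroKernel]
    rw [show z + 2 * n + x = z + x + 2 * n by ring]

lemma summable_norm_nat_rpow {z : ℂ} (hz : 1 < z.re) {σ : ℝ} (hσ : 1 < σ) :
    Summable fun n : ℕ => ‖z + 2 * n‖ ^ (-σ) := by
  refine ((summable_norm_add_nat_rpow (w := z / 2) (by simp; linarith) hσ).mul_left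
    ((2 : ℝ) ^ (-σ))).congr fun n => ?_
  rw [← Real.mul_rpow (by norm_num) (norm_nonneg _)]
  congr 1
  rw [show z + 2 * n = 2 * (z / 2 + n) by ring, norm_mul]
  simp

lemma re_sub_zero_pos {z : ℂ} (hz : 1 < z.re) (ρ : NontrivialZeros) : 0 < (z - ρ.1).re := by
  have := ρ.2.2.2
  simp only [Complex.sub_re]
  linarith

lemma re_add_nat_pos {z : ℂ} (hz : 1 < z.re) (n : ℕ) : 0 < (z + 2 * n).re := by
  have : (0 : ℝ) ≤ n := n.cast_nonneg
  simp
  linarith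

open MeasureTheory in
/-- The formula for real `s` in `(1, 2)`, by integrating its case `s = 2`. -/
lemma formula_of_lt_two {z : ℂ} (hz : 1 < z.re) {σ : ℝ} (h1 : 1 < σ) (h2 : σ < 2)
    (hs1 : Summable fun ρ : NontrivialZeros =>
      (vanishingOrder riemannZeta ρ.1 : ℂ) * (z - ρ.1) ^ (-(σ : ℂ)))
    (hs2 : Summable fun n : ℕ => (z + 2 * (n : ℂ)) ^ (-(σ : ℂ)))
    (hs3 : Summable fun n : ℕ => primeTerm z σ n) :
    (∑' ρ : NontrivialZeros, (vanishingOrder riemannZeta ρ.1 : ℂ) * (z - ρ.1) ^ (-(σ : ℂ))) =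
      z ^ (-(σ : ℂ)) + (z - 1) ^ (-(σ : ℂ)) - (∑' n : ℕ, (z + 2 * (n : ℂ)) ^ (-(σ : ℂ))) -
        (Complex.Gamma σ)⁻¹ * ∑' n : ℕ, primeTerm z σ n := by
  set C : ℂ := ((Real.Gamma (2 - σ) * Real.Gamma σ : ℝ) : ℂ) with hC
  have hG1 := Real.Gamma_pos_of_pos (s := 2 - σ) (by linarith)
  have hG2 := Real.Gamma_pos_of_pos (s := σ) (by linarith)
  have hC0 : C ≠ 0 := by
    rw [hC]; exact_mod_cast (mul_pos hG1 hG2).ne'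
  have hpos := re_sub_zero_pos hz
  have hInt : ∀ i, IntegrableOn (kernelTerm z σ i) (Set.Ioi 0) := by
    rintro (ρ | n | n)
    · exact (integral_kernel (hpos ρ) h1 h2).1.const_mul _
    · exact (integral_kernel (re_add_nat_pos hz n) h1 h2).1
    · exact (integral_prime_kernel h2 n).1
  have hsum : Summable fun i => ∫ x in Set.Ioi 0, ‖kernelTerm z σ i x‖ := by
    refine Summable.sum _ ?_ (Summable.sum _ ?_ ?_)
    · refine Summable.of_nonneg_of_le (fun ρ => integral_nonneg fun _ => norm_nonneg _) (fun ρ => ?_)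
        ((summable_zeros hz h1).mul_left (2 * (Real.Gamma (2 - σ) * Real.Gamma σ)))
      simp only [Function.comp, kernelTerm, zeroKernel, norm_mul (_ : ℂ) (_ * _), Complex.norm_natCast]
      rw [integral_const_mul, mul_left_comm]
      exact mul_le_mul_of_nonneg_left (integral_norm_kernel_le (hpos ρ) h1 h2) (Nat.cast_nonneg _)
    · exact Summable.of_nonneg_of_le (fun ρ => integral_nonneg fun _ => norm_nonneg _)
        (fun n => integral_norm_kernel_le (re_add_nat_pos hz n) h1 h2)
        ((summable_norm_nat_rpow hz h1).mul_left (2 * (Real.Gamma (2 - σ) * Real.Gamma σ)))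
    · exact ((summable_vonMangoldt_mul_log_rpow hz (sub_pos.2 h1)).mul_left
        (Real.Gamma (2 - σ))).congr fun n => (integral_prime_kernel (z := z) h2 n).2.2.symm
  have hmain := hasSum_integral_of_summable_integral_norm hInt hsum
  have hrhs : ∫ x in Set.Ioi 0, ∑' i, kernelTerm z σ i x =
      C * z ^ (-(σ : ℂ)) + C * (z - 1) ^ (-(σ : ℂ)) := by
    rw [setIntegral_congr_fun measurableSet_Ioi fun x hx => (hasSum_kernelTerm hz σ hx).tsum_eq]
    have k1 := integral_kernel (w := z) (by linarith) h1 h2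
    have k2 := integral_kernel (w := z - 1) (by simpa using hz) h1 h2
    simp only [zeroKernel]
    rw [integral_add k1.1 k2.1, k1.2, k2.2]
  rw [hrhs] at hmain
  have hother : HasSum (fun i => ∫ x in Set.Ioi 0, kernelTerm z σ i x)
      (C * (∑' ρ : NontrivialZeros, (vanishingOrder riemannZeta ρ.1 : ℂ) * (z - ρ.1) ^ (-(σ : ℂ))) +
      (C * (∑' n : ℕ, (z + 2 * (n : ℂ)) ^ (-(σ : ℂ))) +
        Real.Gamma (2 - σ) * ∑' n : ℕ, primeTerm z σ n)) := by
    refine HasSum.sum ((hs1.hasSum.mul_left C).congr_fun fun ρ => ?_)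
      (HasSum.sum ((hs2.hasSum.mul_left C).congr_fun fun n => ?_)
        ((hs3.hasSum.mul_left (Real.Gamma (2 - σ) : ℂ)).congr_fun fun n => ?_))
    · simp only [Function.comp, kernelTerm, zeroKernel]
      rw [integral_const_mul, (integral_kernel (hpos ρ) h1 h2).2]
      ring
    · exact (integral_kernel (re_add_nat_pos hz n) h1 h2).2
    · exact (integral_prime_kernel h2 n).2.1
  have hfin := hmain.unique hother
  have hG2' : (Real.Gamma σ : ℂ) ≠ 0 := by exact_mod_cast hG2.ne'
  have hG1' : (Real.Gamma (2 - σ) : ℂ) ≠ 0 := by exact_mod_cast hG1.ne'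
  rw [Complex.Gamma_ofReal]
  apply mul_left_cancel₀ hC0
  have : C * ((Real.Gamma σ : ℂ)⁻¹ * ∑' n : ℕ, primeTerm z σ n) =
      Real.Gamma (2 - σ) * ∑' n : ℕ, primeTerm z σ n := by
    rw [hC, Complex.ofReal_mul]
    field_simp
  rw [mul_sub, mul_sub, mul_add, this, hfin]
  ring

/-- The arithmetic side as a generalized Dirichlet series in `s`, with frequencies
`(log n)⁻¹`. -/
lemma primeTerm_eq (z s : ℂ) (n : ℕ) :
    primeTerm z s n = (ArithmeticFunction.vonMangoldt n * (n : ℂ) ^ (-z) * (Real.log n : ℂ)⁻¹) *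
      ((Real.log n : ℂ)⁻¹) ^ (-s) := by
  by_cases hn : n ≤ 1
  · have : ArithmeticFunction.vonMangoldt n = 0 := by interval_cases n <;> simp
    simp [this, primeTerm]
  have hlog : 0 < Real.log n := Real.log_pos (by exact_mod_cast not_le.1 hn)
  have hl : (Real.log n : ℂ) ≠ 0 := by exact_mod_cast hlog.ne'
  have harg : (Real.log n : ℂ).arg ≠ Real.pi := by
    rw [Complex.arg_ofReal_of_nonneg hlog.le]; exact Real.pi_ne_zero.symm
  rw [primeTerm, Complex.inv_cpow _ _ harg, ← Complex.cpow_neg _ (-s), neg_neg, Complex.cpow_sub _ _ hl,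
    Complex.cpow_one]
  ring

/-- The formula with the arithmetic side summed over all naturals against `Λ`. Both sides are
holomorphic in `Re s > 1` and agree on the real interval `(1, 2)`. -/
theorem formula_vonMangoldt {z s : ℂ} (hz : 1 < z.re) (hs : 1 < s.re) :
    Summable (fun ρ : NontrivialZeros =>
      ‖(vanishingOrder riemannZeta ρ.1 : ℂ) * (z - ρ.1) ^ (-s)‖) ∧
    Summable (fun n : ℕ => ‖(z + 2 * (n : ℂ)) ^ (-s)‖) ∧
    Summable (fun n : ℕ => ‖primeTerm z s n‖) ∧
    (∑' ρ : NontrivialZeros, (vanishingOrder riemannZeta ρ.1 : ℂ) * (z - ρ.1) ^ (-s)) =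
      z ^ (-s) + (z - 1) ^ (-s) - (∑' n : ℕ, (z + 2 * (n : ℂ)) ^ (-s)) -
        (Complex.Gamma s)⁻¹ * ∑' n : ℕ, primeTerm z s n := by
  have a1 : ∀ σ : ℝ, 1 < σ → Summable fun ρ : NontrivialZeros =>
      ‖(vanishingOrder riemannZeta ρ.1 : ℂ)‖ * ‖z - ρ.1‖ ^ (-σ) := fun σ hσ => by
    simpa only [Complex.norm_natCast] using summable_zeros hz hσ
  have w1 : ∀ ρ : NontrivialZeros, (vanishingOrder riemannZeta ρ.1 : ℂ) ≠ 0 → z - ρ.1 ≠ 0 :=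
    fun ρ _ h => by
      have := re_sub_zero_pos hz ρ
      rw [h] at this
      simp at this
  have a2 : ∀ σ : ℝ, 1 < σ → Summable fun n : ℕ => ‖(1 : ℂ)‖ * ‖z + 2 * n‖ ^ (-σ) := fun σ hσ => by
    simpa using summable_norm_nat_rpow hz hσ
  have w2 : ∀ n : ℕ, (1 : ℂ) ≠ 0 → z + 2 * n ≠ 0 := fun n _ h => by
    have := re_add_nat_pos hz n
    rw [h] at this
    simp at this
  have a3 : ∀ σ : ℝ, 1 < σ → Summable fun n : ℕ =>
      ‖(ArithmeticFunction.vonMangoldt n : ℂ) * (n : ℂ) ^ (-z) * (Real.log n : ℂ)⁻¹‖ *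
        ‖(Real.log n : ℂ)⁻¹‖ ^ (-σ) := fun σ hσ => by
    refine (summable_vonMangoldt_mul_log_rpow hz (sub_pos.2 hσ)).congr fun n => ?_
    by_cases hn : n ≤ 1
    · have : ArithmeticFunction.vonMangoldt n = 0 := by interval_cases n <;> simp
      simp [this]
    have hlog : 0 < Real.log n := Real.log_pos (by exact_mod_cast not_le.1 hn)
    rw [norm_mul, norm_mul, norm_inv, Complex.norm_real, Complex.norm_real,
      Real.norm_of_nonneg hlog.le, Real.norm_of_nonneg ArithmeticFunction.vonMangoldt_nonneg,
      Complex.norm_natCast_cpow_of_pos (by omega), Complex.neg_re, Real.inv_rpow hlog.le,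
      ← Real.rpow_neg hlog.le, neg_neg, Real.rpow_sub_one hlog.ne']
    ring
  have w3 : ∀ n : ℕ, (ArithmeticFunction.vonMangoldt n : ℂ) * (n : ℂ) ^ (-z) * (Real.log n : ℂ)⁻¹ ≠ 0 →
      (Real.log n : ℂ)⁻¹ ≠ 0 := fun n h => right_ne_zero_of_mul h
  have s1 := fun {s : ℂ} (hs : 1 < s.re) => summable_norm_cpow w1 a1 hs
  have s2 : ∀ {s : ℂ}, 1 < s.re → Summable fun n : ℕ => ‖(z + 2 * (n : ℂ)) ^ (-s)‖ := fun hs => by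
    simpa only [one_mul] using summable_norm_cpow w2 a2 hs
  have s3 : ∀ {s : ℂ}, 1 < s.re → Summable fun n : ℕ => ‖primeTerm z s n‖ := fun hs => by
    simpa only [primeTerm_eq] using summable_norm_cpow w3 a3 hs
  refine ⟨s1 hs, s2 hs, s3 hs, ?_⟩
  have hopen : IsOpen {s : ℂ | 1 < s.re} := isOpen_lt continuous_const Complex.continuous_re
  have d1 := differentiableOn_tsum_cpow w1 a1
  have d2 : DifferentiableOn ℂ (fun s : ℂ => ∑' n : ℕ, (z + 2 * (n : ℂ)) ^ (-s)) {s | 1 < s.re} := by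
    simpa only [one_mul] using differentiableOn_tsum_cpow w2 a2
  have d3 : DifferentiableOn ℂ (fun s : ℂ => ∑' n : ℕ, primeTerm z s n) {s | 1 < s.re} := by
    simpa only [primeTerm_eq] using differentiableOn_tsum_cpow w3 a3
  have d4 : ∀ w : ℂ, w ≠ 0 → DifferentiableOn ℂ (fun s : ℂ => w ^ (-s)) {s | 1 < s.re} :=
    fun w hw s _ => (differentiableAt_id.neg.const_cpow (Or.inl hw)).differentiableWithinAt
  have hz0 : z ≠ 0 := by rintro rfl; norm_num at hz
  have hz1 : z - 1 ≠ 0 := sub_ne_zero.2 (by rintro rfl; norm_num at hz)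
  have d5 := (((d4 z hz0).add (d4 (z - 1) hz1)).sub d2).sub
    ((differentiable_one_div_Gamma.differentiableOn (s := {s : ℂ | 1 < s.re})).mul d3)
  refine AnalyticOnNhd.eqOn_of_preconnected_of_frequently_eq (d1.analyticOnNhd hopen)
    (d5.analyticOnNhd hopen) (convex_halfSpace_re_gt 1).isPreconnected (z₀ := ((3 / 2 : ℝ) : ℂ))
    (by simp only [Set.mem_ofPred_eq, Complex.ofReal_re]; norm_num) ?_ hs
  refine frequently_of_eventually_ofReal ?_
  filter_upwards [Ioo_mem_nhds (show (1 : ℝ) < 3 / 2 by norm_num) (show (3 / 2 : ℝ) < 2 by norm_num)]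
    with σ hσ
  have hσ1 : 1 < (σ : ℂ).re := by simpa using hσ.1
  exact formula_of_lt_two hz hσ.1 hσ.2 (s1 hσ1).of_norm (s2 hσ1).of_norm (s3 hσ1).of_norm

/-! ### Reindexing by primes -/

lemma primeTerm_prime_pow (z s : ℂ) (q : ℕ × Nat.Primes) :
    primeTerm z s ((q.2 : ℕ) ^ (q.1 + 1)) =
      ((Real.log (q.2 : ℕ) : ℂ)) * ((q.2 : ℕ) : ℂ) ^ (-(((q.1 : ℂ) + 1) * z)) *
        (((((q.1 : ℕ) + 1 : ℕ) : ℝ) * Real.log (q.2 : ℕ) : ℝ) : ℂ) ^ (s - 1) := by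
  obtain ⟨k, p, hp⟩ := q
  simp only
  rw [primeTerm, ArithmeticFunction.vonMangoldt_apply_pow k.succ_ne_zero,
    ArithmeticFunction.vonMangoldt_apply_prime hp, Nat.cast_pow, Nat.cast_pow, Real.log_pow,
    ← Complex.natCast_cpow_natCast_mul]
  push_cast
  congr 3
  ring

/-- The prime powers, on which `Λ` is supported, are parametrized by exponents and primes. -/
lemma hasSum_primes_iff {E : Type*} [AddCommGroup E] [TopologicalSpace E] {f : ℕ → E}
    (hf : ∀ n, ¬ IsPrimePow n → f n = 0) {a : E} :
    HasSum (fun q : ℕ × Nat.Primes => f ((q.2 : ℕ) ^ (q.1 + 1))) a ↔ HasSum f a := by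
  have hsupp : Function.support f ⊆ {n | IsPrimePow n} := fun n hn => by
    by_contra h
    exact hn (hf n h)
  rw [← hasSum_subtype_iff_of_support_subset hsupp]
  exact Equiv.hasSum_iff (f := f ∘ ((↑) : {n | IsPrimePow n} → ℕ))
    ((Equiv.prodComm ℕ Nat.Primes).trans Nat.Primes.prodNatEquiv)

lemma primeTerm_eq_zero {z s : ℂ} {n : ℕ} (hn : ¬ IsPrimePow n) : primeTerm z s n = 0 := by
  simp [primeTerm, ArithmeticFunction.vonMangoldt_eq_zero_iff.2 hn]

/-- Weil's explicit formula in the form used by Deninger: for `Re z > 1`, `Re s > 1`,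
`∑_ρ m(ρ) (z-ρ)^{-s} = z^{-s} + (z-1)^{-s} - ∑_{n≥0} (z+2n)^{-s}
  - Γ(s)⁻¹ ∑_{m≥1} ∑_p (log p) p^{-mz} (m log p)^{s-1}`,
all series converging absolutely.  (The index `q.1 : ℕ` encodes `m = q.1 + 1 ≥ 1`.) -/
theorem explicit_formula_zeta (z s : ℂ) (hz : 1 < z.re) (hs : 1 < s.re) :
    Summable (fun ρ : NontrivialZeros =>
      ‖(vanishingOrder riemannZeta ρ.1 : ℂ) * (z - ρ.1) ^ (-s)‖) ∧
    Summable (fun n : ℕ => ‖(z + 2 * (n : ℂ)) ^ (-s)‖) ∧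
    Summable (fun q : ℕ × Nat.Primes =>
      ‖((Real.log (q.2 : ℕ) : ℂ)) * ((q.2 : ℕ) : ℂ) ^ (-(((q.1 : ℂ) + 1) * z)) *
        (((((q.1 : ℕ) + 1 : ℕ) : ℝ) * Real.log (q.2 : ℕ) : ℝ) : ℂ) ^ (s - 1)‖) ∧
    (∑' ρ : NontrivialZeros, (vanishingOrder riemannZeta ρ.1 : ℂ) * (z - ρ.1) ^ (-s)) =
      z ^ (-s) + (z - 1) ^ (-s) - (∑' n : ℕ, (z + 2 * (n : ℂ)) ^ (-s)) -
        (1 / Complex.Gamma s) *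
          ∑' q : ℕ × Nat.Primes,
            ((Real.log (q.2 : ℕ) : ℂ)) * ((q.2 : ℕ) : ℂ) ^ (-(((q.1 : ℂ) + 1) * z)) *
              (((((q.1 : ℕ) + 1 : ℕ) : ℝ) * Real.log (q.2 : ℕ) : ℝ) : ℂ) ^ (s - 1) := by
  obtain ⟨h1, h2, h3, h4⟩ := formula_vonMangoldt hz hs
  simp only [← primeTerm_prime_pow]
  refine ⟨h1, h2, ?_, ?_⟩
  · exact ((hasSum_primes_iff (f := fun n => ‖primeTerm z s n‖)
      fun n hn => by rw [primeTerm_eq_zero hn, norm_zero]).2 h3.hasSum).summable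
  · rw [h4, one_div, ((hasSum_primes_iff (f := primeTerm z s)
      fun n hn => primeTerm_eq_zero hn).2 h3.of_norm.hasSum).tsum_eq]
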